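/- arXiv:2402.19067 — 2 statements merged into one kernel-verified Lean document; each statement's English description precedes it below -/
import Mathlib

section
/- Let Y be a locally asymptotically midpoint uniformly convex (locally AMUC) real Banach space which has either (i) a normalized, symmetric basic sequence which is not equivalent to the unit vector basis of ℓ_1, or (ii) a normalized sequence with upper p-estimates for some 1 < p < ∞. Then Y fails Lindenstrauss' property B, i.e., there exists a Banach space X such that the set of norm-attaining operators from X to Y is not dense in the space of all bounded linear operators from X to Y. -/
open Filter Topology

/-- The asymptotic midpoint modulus `δ̃_Y(y,t)`: the supremum, over all closed
finite-codimensional subspaces `E` of `Y`, of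
`inf_{z ∈ S_E} max {‖y + t z‖, ‖y - t z‖} - 1`. -/
noncomputable def deltaTilde (Y : Type*) [NormedAddCommGroup Y] [NormedSpace ℝ Y]
    (y : Y) (t : ℝ) : ℝ :=
  sSup {r : ℝ | ∃ E : Submodule ℝ Y, IsClosed (E : Set Y) ∧ FiniteDimensional ℝ (Y ⧸ E) ∧
    r = sInf {m : ℝ | ∃ z : Y, z ∈ E ∧ ‖z‖ = 1 ∧ m = max ‖y + t • z‖ ‖y - t • z‖} - 1}

/-- A Banach space `Y` is locally asymptotically midpoint uniformly convex (locally AMUC)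
if `δ̃_Y(y,t) > 0` for every `y ∈ S_Y` and every `t > 0`. -/
def LocallyAMUC (Y : Type*) [NormedAddCommGroup Y] [NormedSpace ℝ Y] : Prop :=
  ∀ y : Y, ‖y‖ = 1 → ∀ t : ℝ, 0 < t → 0 < deltaTilde Y y t

/-- `(y n)` is a basic sequence: it is a Schauder basis of the closed linear span of its
range, i.e. every element of that closed span has a unique representation as a norm
convergent series `∑ aₖ yₖ`. -/
def IsBasicSeq {Y : Type*} [NormedAddCommGroup Y] [NormedSpace ℝ Y] (y : ℕ → Y) : Prop :=
  ∀ x ∈ closure ((Submodule.span ℝ (Set.range y) : Submodule ℝ Y) : Set Y),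
    ∃! a : ℕ → ℝ,
      Filter.Tendsto (fun n => ∑ k ∈ Finset.range n, a k • y k) Filter.atTop (nhds x)

/-- Two sequences are equivalent if a series `∑ aₖ yₖ` converges exactly when the
series `∑ aₖ zₖ` converges. -/
def SeqEquivalent {Y Z : Type*} [NormedAddCommGroup Y] [NormedSpace ℝ Y]
    [NormedAddCommGroup Z] [NormedSpace ℝ Z] (y : ℕ → Y) (z : ℕ → Z) : Prop :=
  ∀ a : ℕ → ℝ,
    (∃ x : Y, Filter.Tendsto (fun n => ∑ k ∈ Finset.range n, a k • y k)
      Filter.atTop (nhds x)) ↔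
    (∃ x : Z, Filter.Tendsto (fun n => ∑ k ∈ Finset.range n, a k • z k)
      Filter.atTop (nhds x))

/-- `(y n)` is a symmetric basic sequence: it is basic and every permutation of it is a
basic sequence equivalent to it. -/
def IsSymmetricBasicSeq {Y : Type*} [NormedAddCommGroup Y] [NormedSpace ℝ Y]
    (y : ℕ → Y) : Prop :=
  IsBasicSeq y ∧ ∀ σ : Equiv.Perm ℕ, IsBasicSeq (y ∘ σ) ∧ SeqEquivalent (y ∘ σ) y

/-- `(y n)` is equivalent to the unit vector basis of `ℓ₁`: there is `c > 0` with
`‖∑ aₖ yₖ‖ ≥ c ∑ |aₖ|` for all finitely supported scalars. -/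
def EquivL1UnitBasis {Y : Type*} [NormedAddCommGroup Y] [NormedSpace ℝ Y]
    (y : ℕ → Y) : Prop :=
  ∃ c : ℝ, 0 < c ∧ ∀ (n : ℕ) (a : ℕ → ℝ),
    c * ∑ k ∈ Finset.range n, |a k| ≤ ‖∑ k ∈ Finset.range n, a k • y k‖

/-- A normalized sequence `(y n)` has upper `p`-estimates if there is `C > 0` with
`‖∑_{k=1}^n aₖ yₖ‖ ≤ C (∑_{k=1}^n |aₖ|^p)^(1/p)` for all `n` and all scalars. -/
def HasUpperPEstimates {Y : Type*} [NormedAddCommGroup Y] [NormedSpace ℝ Y]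
    (p : ℝ) (y : ℕ → Y) : Prop :=
  ∃ C : ℝ, 0 < C ∧ ∀ (n : ℕ) (a : ℕ → ℝ),
    ‖∑ k ∈ Finset.range n, a k • y k‖ ≤
      C * (∑ k ∈ Finset.range n, |a k| ^ p) ^ (1 / p)

/-- The set of norm-attaining bounded linear operators from `X` to `Y`. -/
def NormAttainingOps (X Y : Type*) [NormedAddCommGroup X] [NormedSpace ℝ X]
    [NormedAddCommGroup Y] [NormedSpace ℝ Y] : Set (X →L[ℝ] Y) :=
  {T | ∃ x : X, ‖x‖ ≤ 1 ∧ ‖T x‖ = ‖T‖}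

/-- `Y` has Lindenstrauss' property B if, for every Banach space `X`, the norm-attaining
operators are dense (in operator norm) in the space of all bounded linear operators from
`X` to `Y`. -/
def PropertyB (Y : Type*) [NormedAddCommGroup Y] [NormedSpace ℝ Y] : Prop :=
  ∀ (X : Type) (_ : NormedAddCommGroup X), ∀ (_ : NormedSpace ℝ X) (_ : CompleteSpace X),
    Dense (NormAttainingOps X Y)

/-!
Both alternatives provide a normalized sequence `y` such that, for every `ε > 0`, there is an
`n > 0` for which all sums of at most `n` terms of `y` have norm at most `ε n`. Such a `y` admits a
Marcinkiewicz sequence space, with norm `‖x‖ = sup_A (∑_{i ∈ A} |x i|) / W #A` for a weight `W`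
growing to infinity very slowly, from which `e k ↦ y k` extends to a bounded operator `S`. In the
closed span of its unit vectors `e k`, the unit ball contains, around each of its points `x`, the
segments `x ± δ e k` for some `δ > 0` and all but finitely many `k`, and `e k → 0` weakly. So if `T`
attains its norm `1` at `x`, then `‖T x ± δ T e k‖ ≤ 1`, and local AMUC at `T x` forces
`‖T e k‖ → 0`. As `‖S e k‖ = 1`, no norm-attaining operator is close to `S`.
-/

section ConvergentSeries

variable {E : Type*} [NormedAddCommGroup E] [NormedSpace ℝ E] {u : ℕ → E}

/-- The convergent series `∑ aₖ uₖ`, encoded by their partial sums: such a series is a continuous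
function on `OnePoint ℕ` whose value at `n` is the `n`-th partial sum and whose value at `∞` is
therefore the sum of the series. -/
def convergentSeries (u : ℕ → E) : Submodule ℝ C(OnePoint ℕ, E) where
  carrier := {f | ∃ a : ℕ → ℝ, ∀ n : ℕ, f (n : OnePoint ℕ) = ∑ k ∈ Finset.range n, a k • u k}
  add_mem' := by
    rintro f g ⟨a, ha⟩ ⟨b, hb⟩
    exact ⟨a + b, fun n => by simp [ha, hb, add_smul, Finset.sum_add_distrib]⟩
  zero_mem' := ⟨0, fun n => by simp⟩
  smul_mem' := by
    rintro c f ⟨a, ha⟩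
    exact ⟨c • a, fun n => by simp [ha, Finset.smul_sum, mul_smul]⟩

lemma mem_convergentSeries_iff_sub_mem_span {f : C(OnePoint ℕ, E)} :
    f ∈ convergentSeries u ↔ f ((0 : ℕ) : OnePoint ℕ) = 0 ∧
      ∀ n : ℕ, f ((n + 1 : ℕ) : OnePoint ℕ) - f (n : OnePoint ℕ) ∈ Submodule.span ℝ {u n} := by
  constructor
  · rintro ⟨a, ha⟩
    refine ⟨by rw [ha]; simp, fun n => ?_⟩
    rw [ha, ha, Finset.sum_range_succ_sub_sum]
    exact Submodule.smul_mem _ _ (Submodule.mem_span_singleton_self _)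
  · rintro ⟨h0, hsucc⟩
    simp only [Submodule.mem_span_singleton] at hsucc
    choose a ha using hsucc
    refine ⟨a, fun n => ?_⟩
    rw [Finset.sum_congr rfl fun k _ => ha k,
      Finset.sum_range_sub (fun n : ℕ => f (n : OnePoint ℕ)), h0, sub_zero]

lemma isClosed_convergentSeries : IsClosed (convergentSeries u : Set C(OnePoint ℕ, E)) := by
  have hinter : (convergentSeries u : Set C(OnePoint ℕ, E)) =
      {f | f ((0 : ℕ) : OnePoint ℕ) = 0} ∩ ⋂ n : ℕ, {f |
        f ((n + 1 : ℕ) : OnePoint ℕ) - f (n : OnePoint ℕ) ∈ Submodule.span ℝ {u n}} := by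
    ext f
    simp [mem_convergentSeries_iff_sub_mem_span]
  rw [hinter]
  refine (isClosed_eq (by fun_prop) continuous_const).inter (isClosed_iInter fun n => ?_)
  exact (Submodule.span ℝ {u n}).closed_of_finiteDimensional.preimage
    (f := fun f : C(OnePoint ℕ, E) => f ((n + 1 : ℕ) : OnePoint ℕ) - f (n : OnePoint ℕ))
    (by fun_prop)

lemma tendsto_of_mem_convergentSeries {f : C(OnePoint ℕ, E)} {a : ℕ → ℝ}
    (ha : ∀ n : ℕ, f (n : OnePoint ℕ) = ∑ k ∈ Finset.range n, a k • u k) :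
    Tendsto (fun n => ∑ k ∈ Finset.range n, a k • u k) atTop (𝓝 (f OnePoint.infty)) := by
  simpa only [← ha] using (OnePoint.continuous_iff_from_nat f).1 f.continuous

lemma sum_smul_mem_span_range (F : Finset ℕ) (a : ℕ → ℝ) :
    ∑ k ∈ F, a k • u k ∈ Submodule.span ℝ (Set.range u) :=
  Submodule.sum_mem _ fun k _ => Submodule.smul_mem _ _ (Submodule.subset_span ⟨k, rfl⟩)

lemma sum_range_ite_smul (F : Finset ℕ) (a : ℕ → ℝ) (n : ℕ) :
    ∑ k ∈ Finset.range n, (if k ∈ F then a k else 0) • u k = ∑ k ∈ F with k < n, a k • u k := by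
  have hfilter : (Finset.range n).filter (· ∈ F) = F.filter (· < n) := by grind
  simp only [ite_smul, zero_smul, ← Finset.sum_filter, hfilter]

lemma tendsto_sum_range_ite_smul (F : Finset ℕ) (a : ℕ → ℝ) :
    Tendsto (fun n => ∑ k ∈ Finset.range n, (if k ∈ F then a k else 0) • u k) atTop
      (𝓝 (∑ k ∈ F, a k • u k)) := by
  have hsum := hasSum_sum_of_ne_finset_zero (f := fun k => (if k ∈ F then a k else 0) • u k)
    (s := F) (L := .unconditional ℕ) fun k hk => by simp [hk]
  rw [Finset.sum_congr rfl fun k hk => by rw [if_pos hk]] at hsum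
  exact hsum.tendsto_sum_nat

end ConvergentSeries

section BasicSequences

variable {E Y Z : Type*} [NormedAddCommGroup E] [NormedSpace ℝ E] [CompleteSpace E]
  [NormedAddCommGroup Y] [NormedSpace ℝ Y] [CompleteSpace Y]
  [NormedAddCommGroup Z] [NormedSpace ℝ Z] [CompleteSpace Z]

/-- The convergent series `∑ aₖ uₖ` form a Banach space which `L` sends bijectively onto the closed
span of the `L uₖ`, so the open mapping theorem bounds all partial sums of `∑ aₖ uₖ`. -/
theorem IsBasicSeq.exists_norm_lift_sum_filter_le {u : ℕ → E} (L : E →L[ℝ] Y)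
    (hL : IsBasicSeq fun k => L (u k))
    (hu : ∀ a : ℕ → ℝ,
      (∃ x, Tendsto (fun n => ∑ k ∈ Finset.range n, a k • L (u k)) atTop (𝓝 x)) →
      ∃ x, Tendsto (fun n => ∑ k ∈ Finset.range n, a k • u k) atTop (𝓝 x)) :
    ∃ C > 0, ∀ (F : Finset ℕ) (a : ℕ → ℝ) (n : ℕ),
      ‖∑ k ∈ F with k < n, a k • u k‖ ≤ C * ‖∑ k ∈ F, a k • L (u k)‖ := by
  let V := convergentSeries u
  let S := (Submodule.span ℝ (Set.range fun k => L (u k))).topologicalClosure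
  have hlim {f : C(OnePoint ℕ, E)} {b : ℕ → ℝ}
      (hb : ∀ n : ℕ, f (n : OnePoint ℕ) = ∑ k ∈ Finset.range n, b k • u k) :
      Tendsto (fun n => ∑ k ∈ Finset.range n, b k • L (u k)) atTop (𝓝 (L (f OnePoint.infty))) := by
    simpa [Function.comp_def] using
      (L.continuous.tendsto _).comp (tendsto_of_mem_convergentSeries hb)
  have hmem (f : V) : L ((f : C(OnePoint ℕ, E)) OnePoint.infty) ∈ S := by
    obtain ⟨b, hb⟩ := f.2
    exact mem_closure_of_tendsto (hlim hb)
      (Eventually.of_forall fun n => sum_smul_mem_span_range _ _)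
  let Φ : V →L[ℝ] S :=
    (L.comp ((ContinuousMap.evalCLM ℝ OnePoint.infty).comp V.subtypeL)).codRestrict S hmem
  have : CompleteSpace V := isClosed_convergentSeries.completeSpace_coe
  have : CompleteSpace S := (Submodule.isClosed_topologicalClosure _).completeSpace_coe
  have hsurj : Function.Surjective Φ := by
    rintro ⟨x, hx⟩
    obtain ⟨a, ha, -⟩ := hL x hx
    obtain ⟨w, hw⟩ := hu a ⟨x, ha⟩
    let f : C(OnePoint ℕ, E) := OnePoint.continuousMapMkNat _ _ hw
    have hf (n : ℕ) : f (n : OnePoint ℕ) = ∑ k ∈ Finset.range n, a k • u k := rfl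
    exact ⟨⟨f, a, hf⟩, Subtype.ext (tendsto_nhds_unique (hlim hf) ha)⟩
  obtain ⟨C, hC, hΦ⟩ := Φ.exists_preimage_norm_le hsurj
  refine ⟨C, hC, fun F a n => ?_⟩
  have hxS : ∑ k ∈ F, a k • L (u k) ∈ S :=
    Submodule.le_topologicalClosure _ (sum_smul_mem_span_range _ _)
  obtain ⟨⟨f, b, hb⟩, hfx, hfle⟩ := hΦ ⟨_, hxS⟩
  have hfx : L (f OnePoint.infty) = ∑ k ∈ F, a k • L (u k) := congrArg Subtype.val hfx
  obtain rfl : b = fun k => if k ∈ F then a k else 0 :=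
    (hL _ hxS).unique (hfx ▸ hlim hb) (tendsto_sum_range_ite_smul F a)
  rw [← sum_range_ite_smul, ← hb]
  exact (f.norm_coe_le_norm _).trans hfle

theorem IsBasicSeq.exists_norm_sum_filter_le {y : ℕ → Y} (hy : IsBasicSeq y) {z : ℕ → Z}
    (hz : ∀ a : ℕ → ℝ,
      (∃ x, Tendsto (fun n => ∑ k ∈ Finset.range n, a k • y k) atTop (𝓝 x)) →
      ∃ x, Tendsto (fun n => ∑ k ∈ Finset.range n, a k • z k) atTop (𝓝 x)) :
    ∃ C > 0, ∀ (F : Finset ℕ) (a : ℕ → ℝ) (n : ℕ),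
      ‖∑ k ∈ F with k < n, a k • z k‖ ≤ C * ‖∑ k ∈ F, a k • y k‖ := by
  have hpair (s : Finset ℕ) (a : ℕ → ℝ) :
      ∑ k ∈ s, a k • (y k, z k) = (∑ k ∈ s, a k • y k, ∑ k ∈ s, a k • z k) :=
    Prod.ext (by simp [Prod.fst_sum]) (by simp [Prod.snd_sum])
  obtain ⟨C, hC, hle⟩ := IsBasicSeq.exists_norm_lift_sum_filter_le
    (u := fun k => (y k, z k)) (ContinuousLinearMap.fst ℝ Y Z) hy fun a ⟨x, hx⟩ => by
      obtain ⟨w, hw⟩ := hz a ⟨x, hx⟩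
      simp only [hpair]
      exact ⟨(x, w), hx.prodMk_nhds hw⟩
  refine ⟨C, hC, fun F a n => le_trans ?_ (hle F a n)⟩
  rw [hpair]
  exact norm_snd_le (∑ k ∈ F with k < n, a k • y k, ∑ k ∈ F with k < n, a k • z k)

end BasicSequences

section Symmetry

variable {Y : Type*} [NormedAddCommGroup Y] [NormedSpace ℝ Y] {y : ℕ → Y} {K M : ℝ}

/-- `K` is a basis constant of `y`: the initial projections of finite linear combinations of `y`
have norm at most `K`. -/
def HasBasisConst (K : ℝ) (y : ℕ → Y) : Prop :=
  ∀ (F : Finset ℕ) (a : ℕ → ℝ) (n : ℕ), ‖∑ k ∈ F with k < n, a k • y k‖ ≤ K * ‖∑ k ∈ F, a k • y k‖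

/-- `M` is a symmetric constant of `y`: moving finitely many terms of `y` to other places by an
injection multiplies norms by at most `M`. -/
def HasSymmetricConst (M : ℝ) (y : ℕ → Y) : Prop :=
  ∀ (F : Finset ℕ) (a : ℕ → ℝ) (f : ℕ → ℕ), Set.InjOn f F →
    ‖∑ k ∈ F, a k • y (f k)‖ ≤ M * ‖∑ k ∈ F, a k • y k‖

lemma IsBasicSeq.exists_hasBasisConst [CompleteSpace Y] (hy : IsBasicSeq y) :
    ∃ K > 0, HasBasisConst K y :=
  hy.exists_norm_sum_filter_le fun _ h => h

lemma HasBasisConst.one_le (hK : HasBasisConst K y) (hy : ∀ n, ‖y n‖ = 1) : 1 ≤ K := by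
  simpa [Finset.filter_singleton, hy] using hK {0} 1 1

lemma HasBasisConst.abs_le (hK : HasBasisConst K y) (hy : ∀ n, ‖y n‖ = 1) {F : Finset ℕ}
    (a : ℕ → ℝ) {k : ℕ} (hk : k ∈ F) : |a k| ≤ 2 * K * ‖∑ i ∈ F, a i • y i‖ := by
  have hsucc : F.filter (· < k + 1) = insert k (F.filter (· < k)) := by grind
  calc |a k| = ‖a k • y k‖ := by rw [norm_smul, hy, mul_one, Real.norm_eq_abs]
    _ = ‖∑ i ∈ F with i < k + 1, a i • y i - ∑ i ∈ F with i < k, a i • y i‖ := by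
      rw [hsucc, Finset.sum_insert (by simp), add_sub_cancel_right]
    _ ≤ K * ‖∑ i ∈ F, a i • y i‖ + K * ‖∑ i ∈ F, a i • y i‖ :=
      (norm_sub_le _ _).trans (add_le_add (hK F a _) (hK F a _))
    _ = 2 * K * ‖∑ i ∈ F, a i • y i‖ := by ring

lemma norm_sum_smul_le_card_mul {ι : Type*} {v : ι → Y} (hv : ∀ i, ‖v i‖ = 1) {Q : Finset ι}
    {a : ι → ℝ} {c : ℝ} (ha : ∀ i ∈ Q, |a i| ≤ c) : ‖∑ i ∈ Q, a i • v i‖ ≤ Q.card * c :=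
  (norm_sum_le _ _).trans <| (Finset.sum_le_card_nsmul _ _ c fun i hi => by
    simpa [norm_smul, hv] using ha i hi).trans_eq (nsmul_eq_mul _ _)

lemma card_filter_lt_or_lt_le {F : Finset ℕ} {f : ℕ → ℕ} (hf : Set.InjOn f F) (N : ℕ) :
    (F.filter fun k => k < N ∨ f k < N).card ≤ 2 * N := by
  have hid : (F.filter (· < N)).card ≤ N := by
    simpa using Finset.card_le_card (show F.filter (· < N) ⊆ Finset.range N by grind)
  have himage : (F.filter (f · < N)).card ≤ N := by
    simpa using Finset.card_le_card_of_injOn (t := Finset.range N) f (by grind [Set.MapsTo])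
      (hf.mono (Finset.coe_subset.2 (Finset.filter_subset _ _)))
  rw [Finset.filter_or]
  exact (Finset.card_union_le _ _).trans (by lia)

lemma HasBasisConst.hasSymmetricConst_of_tail (hK : HasBasisConst K y) (hy : ∀ n, ‖y n‖ = 1)
    {C : ℝ} (hC : 0 ≤ C) {N : ℕ}
    (htail : ∀ (F : Finset ℕ) (a : ℕ → ℝ) (f : ℕ → ℕ), Set.InjOn f F →
      (∀ k ∈ F, N ≤ k ∧ N ≤ f k) → ‖∑ k ∈ F, a k • y (f k)‖ ≤ C * ‖∑ k ∈ F, a k • y k‖) :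
    HasSymmetricConst (C * (1 + 4 * K * N) + 4 * K * N) y := by
  intro F a f hf
  let Q := F.filter fun k => k < N ∨ f k < N
  let G := F.filter fun k => ¬(k < N ∨ f k < N)
  set D := ‖∑ k ∈ F, a k • y k‖
  have hsplit (v : ℕ → Y) : ∑ k ∈ F, a k • v k = ∑ k ∈ Q, a k • v k + ∑ k ∈ G, a k • v k :=
    (Finset.sum_filter_add_sum_filter_not _ _ _).symm
  have hQ (v : ℕ → Y) (hv : ∀ n, ‖v n‖ = 1) : ‖∑ k ∈ Q, a k • v k‖ ≤ 4 * K * N * D := by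
    have hcard : (Q.card : ℝ) ≤ 2 * N := mod_cast card_filter_lt_or_lt_le hf N
    have hKD : 0 ≤ 2 * K * D :=
      mul_nonneg (by linarith [hK.one_le hy]) (norm_nonneg _)
    calc ‖∑ k ∈ Q, a k • v k‖ ≤ Q.card * (2 * K * D) :=
          norm_sum_smul_le_card_mul hv fun k hk => hK.abs_le hy a (Finset.mem_filter.1 hk).1
      _ ≤ 2 * N * (2 * K * D) := by gcongr
      _ = 4 * K * N * D := by ring
  have hG : ‖∑ k ∈ G, a k • y k‖ ≤ (1 + 4 * K * N) * D := by
    rw [eq_sub_of_add_eq' (hsplit y).symm]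
    linarith [norm_sub_le (∑ k ∈ F, a k • y k) (∑ k ∈ Q, a k • y k), hQ y hy]
  calc ‖∑ k ∈ F, a k • y (f k)‖
      ≤ ‖∑ k ∈ Q, a k • y (f k)‖ + ‖∑ k ∈ G, a k • y (f k)‖ := by
        rw [hsplit fun k => y (f k)]
        exact norm_add_le _ _
    _ ≤ 4 * K * N * D + C * ((1 + 4 * K * N) * D) := by
      refine add_le_add (hQ _ fun n => hy _) ((htail G a f (hf.mono ?_) ?_).trans ?_)
      · exact Finset.coe_subset.2 (Finset.filter_subset _ _)
      · grind
      · gcongr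
    _ = (C * (1 + 4 * K * N) + 4 * K * N) * D := by ring

theorem exists_perm_eqOn_of_pairwise_disjoint {ι α : Type*} {S F : ι → Finset α} {f : ι → α → α}
    (hS : Pairwise fun i j => Disjoint (S i : Set α) (S j)) (hFS : ∀ i, F i ⊆ S i)
    (hmaps : ∀ i, Set.MapsTo (f i) (F i) (S i)) (hinj : ∀ i, Set.InjOn (f i) (F i)) :
    ∃ σ : Equiv.Perm α, ∀ i, Set.EqOn σ (f i) (F i) := by
  classical
  have hblock (i : ι) : ∃ τ : Equiv.Perm (S i), ∀ x : S i, (x : α) ∈ F i → (τ x : α) = f i x :=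
    Set.MapsTo.exists_equiv_extend_of_card_eq (s := {x : S i | (x : α) ∈ F i})
      (f := fun x : S i => f i x) (by simp) (fun x hx => hmaps i hx)
      fun x hx x' hx' h => Subtype.ext (hinj i hx hx' h)
  choose τ hτ using hblock
  let e := Set.unionEqSigmaOfDisjoint hS
  let σ : Equiv.Perm α := Equiv.Perm.ofSubtype ((e.trans (Equiv.sigmaCongrRight τ)).trans e.symm)
  refine ⟨σ, fun i x hx => ?_⟩
  have hxS : x ∈ S i := hFS i hx
  have hxU : x ∈ ⋃ i, (S i : Set α) := Set.mem_iUnion.2 ⟨i, hxS⟩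
  have hex : e ⟨x, hxU⟩ = ⟨i, x, hxS⟩ := (Equiv.eq_symm_apply e).1 rfl
  rw [← hτ i ⟨x, hxS⟩ hx]
  simp only [σ]
  rw [Equiv.Perm.ofSubtype_apply_of_mem _ hxU]
  simp [hex, e]

/-- Gliding hump: violations of ever larger symmetric constants supported on disjoint blocks would
be glued into one permutation violating its equivalence constant. -/
theorem IsSymmetricBasicSeq.exists_tail_bound [CompleteSpace Y] (hs : IsSymmetricBasicSeq y) :
    ∃ N : ℕ, ∀ (F : Finset ℕ) (a : ℕ → ℝ) (f : ℕ → ℕ), Set.InjOn f F →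
      (∀ k ∈ F, N ≤ k ∧ N ≤ f k) → ‖∑ k ∈ F, a k • y (f k)‖ ≤ N * ‖∑ k ∈ F, a k • y k‖ := by
  by_contra! hbad
  choose F a f hinj htail hlt using hbad
  have hnext (N : ℕ) : ∃ N' > N, ∀ k ∈ F N, k < N' ∧ f N k < N' := by
    obtain ⟨b, hb⟩ := (F N).bddAbove
    obtain ⟨c, hc⟩ := ((F N).image (f N)).bddAbove
    refine ⟨N + b + c + 1, by lia, fun k hk => ?_⟩
    have hkb : k ≤ b := hb hk
    have hkc : f N k ≤ c := hc (by simpa using ⟨k, hk, rfl⟩)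
    lia
  choose next hlt_next hF_next using hnext
  let P (j : ℕ) : ℕ := next^[j] 0
  have hP_succ (j : ℕ) : P (j + 1) = next (P j) := Function.iterate_succ_apply' _ _ _
  have hP : StrictMono P := strictMono_nat_of_lt_succ fun j => hP_succ j ▸ hlt_next _
  obtain ⟨σ, hσ⟩ := exists_perm_eqOn_of_pairwise_disjoint
    (S := fun j => Finset.Ico (P j) (P (j + 1))) (F := fun j => F (P j)) (f := fun j => f (P j))
    (by simpa only [Finset.coe_Ico, Order.succ_eq_add_one] using!
      hP.monotone.pairwise_disjoint_on_Ico_succ)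
    (fun j k hk => by grind) (fun j k hk => by grind) fun j => hinj _
  obtain ⟨C, -, hC⟩ := hs.1.exists_norm_sum_filter_le (z := y ∘ σ) fun a => (hs.2 σ).2 a |>.2
  obtain ⟨j, hj⟩ := exists_nat_ge C
  have hCP : C ≤ P j := hj.trans (mod_cast hP.le_apply)
  refine (hlt (P j)).not_ge ?_
  calc ‖∑ k ∈ F (P j), a (P j) k • y (f (P j) k)‖
      = ‖∑ k ∈ F (P j) with k < P (j + 1), a (P j) k • (y ∘ σ) k‖ := by
        rw [Finset.filter_true_of_mem fun k hk => hP_succ j ▸ (hF_next _ k hk).1]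
        exact congrArg _ (Finset.sum_congr rfl fun k hk => by simp [hσ j hk])
    _ ≤ C * ‖∑ k ∈ F (P j), a (P j) k • y k‖ := hC _ _ _
    _ ≤ P j * ‖∑ k ∈ F (P j), a (P j) k • y k‖ := by gcongr

theorem IsSymmetricBasicSeq.exists_hasSymmetricConst [CompleteSpace Y]
    (hs : IsSymmetricBasicSeq y) (hy : ∀ n, ‖y n‖ = 1) : ∃ M, HasSymmetricConst M y := by
  obtain ⟨K, -, hK⟩ := hs.1.exists_hasBasisConst
  obtain ⟨N, hN⟩ := hs.exists_tail_bound
  exact ⟨_, hK.hasSymmetricConst_of_tail hy N.cast_nonneg hN⟩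

end Symmetry

section SublinearSums

variable {Y : Type*} [NormedAddCommGroup Y] [NormedSpace ℝ Y] {y : ℕ → Y} {K M : ℝ}

/-- The sums of at most `n` terms of `y` have norm `o(n)`, uniformly in the choice of the terms, at
least along a subsequence of `n`. Both alternatives of the theorem provide such a `y`. -/
def HasSublinearSums (y : ℕ → Y) : Prop :=
  ∀ ε > 0, ∃ n > 0, ∀ A : Finset ℕ, A.card ≤ n → ‖∑ k ∈ A, y k‖ ≤ ε * n

lemma sum_image_invFunOn {α β : Type*} [DecidableEq β] [Nonempty α] {F : Finset α} {f : α → β}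
    (hf : Set.InjOn f F) (a : α → ℝ) (v : β → Y) :
    ∑ j ∈ F.image f, a (Function.invFunOn f F j) • v j = ∑ k ∈ F, a k • v (f k) := by
  rw [Finset.sum_image hf]
  exact Finset.sum_congr rfl fun k hk => by
    rw [hf.leftInvOn_invFunOn (Finset.mem_coe.2 hk)]

lemma HasBasisConst.norm_sum_filter_comp_le (hK : HasBasisConst K y) {F : Finset ℕ} (a : ℕ → ℝ)
    {f : ℕ → ℕ} (hf : Set.InjOn f F) (n : ℕ) :
    ‖∑ k ∈ F with f k < n, a k • y (f k)‖ ≤ K * ‖∑ k ∈ F, a k • y (f k)‖ := by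
  have hle := hK (F.image f) (a ∘ Function.invFunOn f F) n
  simp only [Finset.sum_filter, ← smul_ite_zero] at hle ⊢
  rwa [Function.comp_def, sum_image_invFunOn hf, sum_image_invFunOn hf] at hle

/-- Symmetry moves the terms outside `B` far to the right, where the basis projection cuts them
off. -/
lemma HasSymmetricConst.norm_sum_subset_le (hM : HasSymmetricConst M y) (hK : HasBasisConst K y)
    (hK₀ : 0 ≤ K) {F B : Finset ℕ} (hB : B ⊆ F) (a : ℕ → ℝ) :
    ‖∑ k ∈ B, a k • y k‖ ≤ K * M * ‖∑ k ∈ F, a k • y k‖ := by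
  obtain ⟨p, hp⟩ := F.exists_nat_subset_range
  have hlt {k : ℕ} (hk : k ∈ F) : k < p := Finset.mem_range.1 (hp hk)
  let f (k : ℕ) : ℕ := if k ∈ B then k else k + p
  have hf : Set.InjOn f F := fun i hi j hj => by grind
  have hBf : F.filter (f · < p) = B := by grind
  calc ‖∑ k ∈ B, a k • y k‖ = ‖∑ k ∈ F with f k < p, a k • y (f k)‖ := by
        rw [hBf]
        exact congrArg _ (Finset.sum_congr rfl fun k hk => by simp [f, hk])
    _ ≤ K * ‖∑ k ∈ F, a k • y (f k)‖ := hK.norm_sum_filter_comp_le a hf p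
    _ ≤ K * (M * ‖∑ k ∈ F, a k • y k‖) := by gcongr; exact hM F a f hf
    _ = K * M * ‖∑ k ∈ F, a k • y k‖ := by ring

lemma HasSymmetricConst.norm_sum_abs_smul_le (hM : HasSymmetricConst M y)
    (hK : HasBasisConst K y) (hK₀ : 0 ≤ K) (F : Finset ℕ) (a : ℕ → ℝ) :
    ‖∑ k ∈ F, |a k| • y k‖ ≤ 2 * (K * M) * ‖∑ k ∈ F, a k • y k‖ := by
  have hsplit : ∑ k ∈ F, |a k| • y k =
      ∑ k ∈ F with 0 ≤ a k, a k • y k - ∑ k ∈ F with ¬0 ≤ a k, a k • y k := by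
    rw [← Finset.sum_filter_add_sum_filter_not F (0 ≤ a ·), sub_eq_add_neg,
      ← Finset.sum_neg_distrib]
    congr 1 <;> refine Finset.sum_congr rfl fun k hk => ?_
    · rw [abs_of_nonneg (Finset.mem_filter.1 hk).2]
    · rw [abs_of_neg (not_le.1 (Finset.mem_filter.1 hk).2), neg_smul]
  rw [hsplit]
  linarith [norm_sub_le (∑ k ∈ F with 0 ≤ a k, a k • y k) (∑ k ∈ F with ¬0 ≤ a k, a k • y k),
    hM.norm_sum_subset_le hK hK₀ (F.filter_subset (0 ≤ a ·)) a,
    hM.norm_sum_subset_le hK hK₀ (F.filter_subset (¬0 ≤ a ·)) a]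

/-- Average over the cyclic shifts of the coefficients. -/
lemma HasSymmetricConst.norm_sum_smul_sum_le (hM : HasSymmetricConst M y) (m : ℕ) (b : ℕ → ℝ) :
    ‖(∑ i ∈ Finset.range m, b i) • ∑ j ∈ Finset.range m, y j‖ ≤
      m * (M * ‖∑ i ∈ Finset.range m, b i • y i‖) := by
  have hshift (i : ℕ) :
      ∑ t ∈ Finset.range m, y ((i + t) % m) = ∑ j ∈ Finset.range m, y j := by
    calc ∑ t ∈ Finset.range m, y ((i + t) % m) = ∑ j ∈ Finset.Ico i (i + m), y (j % m) := by
          rw [Finset.sum_Ico_eq_sum_range, add_tsub_cancel_left]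
      _ = ∑ j ∈ Finset.range m, y j := by
        rw [← Nat.image_Ico_mod i m, Finset.sum_image (Nat.mod_injOn_Ico i m)]
  have hinj (t : ℕ) : Set.InjOn (fun i => (i + t) % m) (Finset.range m) := fun i hi j hj h => by
    have hi : i < m := by simpa using hi
    have hj : j < m := by simpa using hj
    exact Nat.add_right_cancel (Nat.mod_injOn_Ico t m (by simp; lia) (by simp; lia) h)
  calc ‖(∑ i ∈ Finset.range m, b i) • ∑ j ∈ Finset.range m, y j‖
      = ‖∑ t ∈ Finset.range m, ∑ i ∈ Finset.range m, b i • y ((i + t) % m)‖ := by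
        rw [Finset.sum_comm, Finset.sum_smul]
        simp only [← Finset.smul_sum, hshift]
    _ ≤ (Finset.range m).card • (M * ‖∑ i ∈ Finset.range m, b i • y i‖) :=
      (norm_sum_le _ _).trans (Finset.sum_le_card_nsmul _ _ _ fun t _ => hM _ b _ (hinj t))
    _ = m * (M * ‖∑ i ∈ Finset.range m, b i • y i‖) := by simp

lemma HasSymmetricConst.norm_sum_le_of_card_eq (hM : HasSymmetricConst M y) {A B : Finset ℕ}
    (h : A.card = B.card) : ‖∑ k ∈ A, y k‖ ≤ M * ‖∑ k ∈ B, y k‖ := by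
  obtain ⟨f, hf⟩ := B.finite_toSet.exists_bijOn_of_encard_eq (t := (A : Set ℕ)) (by simp [h])
  have himage : B.image f = A := by exact_mod_cast hf.image_eq
  simpa [← himage, Finset.sum_image hf.injOn] using hM B 1 f hf.injOn

lemma HasSymmetricConst.norm_sum_le_of_card_le (hM : HasSymmetricConst M y) (hM₀ : 0 ≤ M)
    (hK : HasBasisConst K y) {A : Finset ℕ} {n : ℕ} (h : A.card ≤ n) :
    ‖∑ k ∈ A, y k‖ ≤ M * (K * ‖∑ k ∈ Finset.range n, y k‖) := by
  have hfilter : (Finset.range n).filter (· < A.card) = Finset.range A.card := by grind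
  calc ‖∑ k ∈ A, y k‖ ≤ M * ‖∑ k ∈ Finset.range A.card, y k‖ :=
        hM.norm_sum_le_of_card_eq (by simp)
    _ ≤ M * (K * ‖∑ k ∈ Finset.range n, y k‖) := by
      gcongr
      simpa [hfilter] using hK (Finset.range n) 1 A.card

lemma HasSymmetricConst.one_le (hM : HasSymmetricConst M y) (hy : ∀ n, ‖y n‖ = 1) : 1 ≤ M := by
  simpa [hy] using hM {0} 1 id

theorem HasSymmetricConst.hasSublinearSums (hM : HasSymmetricConst M y) (hK : HasBasisConst K y)
    (hy : ∀ n, ‖y n‖ = 1) (hne : ¬EquivL1UnitBasis y) : HasSublinearSums y := by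
  intro ε hε
  have hM₁ : 1 ≤ M := hM.one_le hy
  have hK₁ : 1 ≤ K := hK.one_le hy
  let c : ℝ := ε / (M * K * M * (2 * (K * M)))
  have hc : 0 < c := by positivity
  have hcε : M * K * M * (2 * (K * M)) * c = ε := mul_div_cancel₀ _ (by positivity)
  obtain ⟨n, a, ha⟩ : ∃ (n : ℕ) (a : ℕ → ℝ),
      ‖∑ k ∈ Finset.range n, a k • y k‖ < c * ∑ k ∈ Finset.range n, |a k| := by
    simpa [EquivL1UnitBasis, hc] using fun h => hne ⟨c, hc, h⟩
  have hs : 0 < ∑ k ∈ Finset.range n, |a k| := pos_of_mul_pos_right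
    ((norm_nonneg _).trans_lt ha) hc.le
  have hn : n ≠ 0 := by
    rintro rfl
    simp at hs
  have hle : ‖∑ k ∈ Finset.range n, y k‖ ≤ n * (M * (2 * (K * M) * c)) := by
    have hshift := hM.norm_sum_smul_sum_le n fun i => |a i|
    rw [norm_smul, Real.norm_of_nonneg hs.le] at hshift
    refine le_of_mul_le_mul_left (hshift.trans ?_) hs
    calc n * (M * ‖∑ i ∈ Finset.range n, |a i| • y i‖)
        ≤ n * (M * (2 * (K * M) * (c * ∑ k ∈ Finset.range n, |a k|))) := by
          gcongr
          exact (hM.norm_sum_abs_smul_le hK (by linarith) _ a).trans (by gcongr)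
      _ = (∑ k ∈ Finset.range n, |a k|) * (n * (M * (2 * (K * M) * c))) := by ring
  refine ⟨n, hn.bot_lt, fun A hA => ?_⟩
  calc ‖∑ k ∈ A, y k‖ ≤ M * (K * ‖∑ k ∈ Finset.range n, y k‖) :=
        hM.norm_sum_le_of_card_le (by linarith) hK hA
    _ ≤ M * (K * (n * (M * (2 * (K * M) * c)))) := by gcongr
    _ = M * K * M * (2 * (K * M)) * c * n := by ring
    _ = ε * n := by rw [hcε]

theorem IsSymmetricBasicSeq.hasSublinearSums [CompleteSpace Y] (hs : IsSymmetricBasicSeq y)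
    (hy : ∀ n, ‖y n‖ = 1) (hne : ¬EquivL1UnitBasis y) : HasSublinearSums y := by
  obtain ⟨K, -, hK⟩ := hs.1.exists_hasBasisConst
  obtain ⟨M, hM⟩ := hs.exists_hasSymmetricConst hy
  exact hM.hasSublinearSums hK hy hne

theorem HasUpperPEstimates.hasSublinearSums {p : ℝ} (h : HasUpperPEstimates p y) (hp : 1 < p) :
    HasSublinearSums y := by
  obtain ⟨C, hC, h⟩ := h
  have hindicator (A : Finset ℕ) : ‖∑ k ∈ A, y k‖ ≤ C * (A.card : ℝ) ^ (1 / p) := by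
    obtain ⟨m, hm⟩ := A.exists_nat_subset_range
    have hle := h m fun k => if k ∈ A then 1 else 0
    simpa [ite_smul, apply_ite abs, ite_pow, Real.zero_rpow (by positivity : p ≠ 0),
      Finset.inter_eq_right.2 hm] using hle
  have hlim : Tendsto (fun n : ℕ => C * (n : ℝ) ^ (-(1 - 1 / p))) atTop (𝓝 0) := by
    have hp' : 0 < 1 - 1 / p := by rw [sub_pos, div_lt_one (by linarith)]; exact hp
    simpa using ((tendsto_rpow_neg_atTop hp').comp tendsto_natCast_atTop_atTop).const_mul C
  intro ε hε
  obtain ⟨n, hn, hn₀⟩ := ((hlim.eventually (gt_mem_nhds hε)).and (eventually_gt_atTop 0)).exists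
  have hn₀' : (0 : ℝ) < n := mod_cast hn₀
  refine ⟨n, hn₀, fun A hA => ?_⟩
  calc ‖∑ k ∈ A, y k‖ ≤ C * (A.card : ℝ) ^ (1 / p) := hindicator A
    _ ≤ C * (n : ℝ) ^ (1 / p) := by gcongr
    _ = C * (n : ℝ) ^ (-(1 - 1 / p)) * n := by
      rw [mul_assoc, ← Real.rpow_add_one hn₀'.ne']
      ring_nf
    _ ≤ ε * n := by gcongr

end SublinearSums

section WeaklyNull

variable {Y : Type*} [NormedAddCommGroup Y] [NormedSpace ℝ Y]

lemma sum_abs_apply_le {ι : Type*} {y : ι → Y} (g : Y →L[ℝ] ℝ) {A : Finset ι} {C : ℝ}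
    (h : ∀ B ⊆ A, ‖∑ i ∈ B, y i‖ ≤ C) : ∑ i ∈ A, |g (y i)| ≤ 2 * (‖g‖ * C) := by
  have hle {B : Finset ι} (hB : B ⊆ A) : |∑ i ∈ B, g (y i)| ≤ ‖g‖ * C := by
    rw [← map_sum, ← Real.norm_eq_abs]
    exact g.le_opNorm_of_le (h B hB)
  have hpos : ∑ i ∈ A with 0 ≤ g (y i), |g (y i)| = ∑ i ∈ A with 0 ≤ g (y i), g (y i) :=
    Finset.sum_congr rfl fun i hi => abs_of_nonneg (Finset.mem_filter.1 hi).2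
  have hneg : ∑ i ∈ A with ¬0 ≤ g (y i), |g (y i)| = -∑ i ∈ A with ¬0 ≤ g (y i), g (y i) := by
    rw [← Finset.sum_neg_distrib]
    exact Finset.sum_congr rfl fun i hi => abs_of_neg (not_le.1 (Finset.mem_filter.1 hi).2)
  rw [← Finset.sum_filter_add_sum_filter_not A fun i => 0 ≤ g (y i), hpos, hneg]
  linarith [le_of_abs_le (hle (A.filter_subset fun i => 0 ≤ g (y i))),
    neg_le_of_abs_le (hle (A.filter_subset fun i => ¬0 ≤ g (y i)))]

theorem HasSublinearSums.tendsto_apply {y : ℕ → Y} (hy : HasSublinearSums y) (g : Y →L[ℝ] ℝ) :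
    Tendsto (fun k => g (y k)) atTop (𝓝 0) := by
  rw [← Nat.cofinite_eq_atTop, Metric.tendsto_nhds]
  intro ε hε
  obtain ⟨n, hn, hle⟩ := hy (ε / (4 * (‖g‖ + 1))) (by positivity)
  have hn : (0 : ℝ) < n := mod_cast hn
  rw [eventually_cofinite]
  by_contra hinf
  obtain ⟨A, hA, rfl⟩ := Set.Infinite.exists_subset_card_eq hinf n
  have hlow : A.card • ε ≤ ∑ k ∈ A, |g (y k)| :=
    Finset.card_nsmul_le_sum _ _ _ fun k hk => by
      simpa [Real.dist_eq] using hA hk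
  have hup := sum_abs_apply_le (y := y) g fun B hB => hle B (Finset.card_le_card hB)
  have hlt : 2 * (‖g‖ * (ε / (4 * (‖g‖ + 1)) * A.card)) < A.card * ε := by
    have hratio : ‖g‖ / (‖g‖ + 1) < 1 := (div_lt_one (by positivity)).2 (by linarith)
    calc 2 * (‖g‖ * (ε / (4 * (‖g‖ + 1)) * A.card))
        = ‖g‖ / (‖g‖ + 1) * (A.card * ε) / 2 := by field_simp; ring
      _ ≤ 1 * (A.card * ε) / 2 := by gcongr
      _ < A.card * ε := by linarith [mul_pos hn hε]
  rw [nsmul_eq_mul] at hlow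
  linarith

variable {ι : Type*} {l : Filter ι} {u : ι → Y}

lemma eventually_exists_mem_norm_sub_lt
    (hu : ∀ g : Y →L[ℝ] ℝ, Tendsto (fun k => g (u k)) l (𝓝 0)) (E : Submodule ℝ Y)
    [IsClosed (E : Set Y)] [FiniteDimensional ℝ (Y ⧸ E)] {ε : ℝ} (hε : 0 < ε) :
    ∀ᶠ k in l, ∃ z ∈ E, ‖u k - z‖ < ε := by
  let φ := (Module.finBasis ℝ (Y ⧸ E)).equivFunL
  have hφ : Tendsto (fun k => φ (E.mkQL (u k))) l (𝓝 0) :=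
    tendsto_pi_nhds.2 fun i => hu (((ContinuousLinearMap.proj i).comp φ.toContinuousLinearMap).comp
      E.mkQL)
  have hquot : Tendsto (fun k => E.mkQL (u k)) l (𝓝 0) := by
    simpa [Function.comp_def] using (φ.symm.continuous.tendsto 0).comp hφ
  filter_upwards [(tendsto_zero_iff_norm_tendsto_zero.1 hquot).eventually
    (gt_mem_nhds (half_pos hε))] with k hk
  obtain ⟨w, hw, hwε⟩ := Submodule.Quotient.norm_mk_lt (E.mkQL (u k)) (half_pos hε)
  exact ⟨u k - w, (Submodule.Quotient.eq E).1 hw.symm, by rw [sub_sub_cancel]; linarith⟩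

end WeaklyNull

section MidpointConvexity

variable {X Y : Type*} [NormedAddCommGroup X] [NormedSpace ℝ X]
  [NormedAddCommGroup Y] [NormedSpace ℝ Y]

lemma norm_add_smul_le_max (u v : Y) {s : ℝ} (hs : |s| ≤ 1) :
    ‖u + s • v‖ ≤ max ‖u + v‖ ‖u - v‖ := by
  obtain ⟨h₁, h₂⟩ := abs_le.1 hs
  refine convexOn_univ_norm.le_max_of_mem_segment (Set.mem_univ _) (Set.mem_univ _)
    ⟨(1 + s) / 2, (1 - s) / 2, by linarith, by linarith, by ring, by module⟩

lemma max_norm_add_smul_le (u v : Y) {s : ℝ} (hs : |s| ≤ 1) :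
    max ‖u + s • v‖ ‖u - s • v‖ ≤ max ‖u + v‖ ‖u - v‖ := by
  rw [sub_eq_add_neg, ← neg_smul]
  exact max_le (norm_add_smul_le_max u v hs) (norm_add_smul_le_max u v (by rwa [abs_neg]))

theorem LocallyAMUC.exists_subspace (hY : LocallyAMUC Y) {y : Y} (hy : ‖y‖ = 1) {t : ℝ}
    (ht : 0 < t) : ∃ E : Submodule ℝ Y, IsClosed (E : Set Y) ∧ FiniteDimensional ℝ (Y ⧸ E) ∧
      ∃ ε > 0, ∀ z ∈ E, t ≤ ‖z‖ → 1 + ε ≤ max ‖y + z‖ ‖y - z‖ := by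
  obtain ⟨r, ⟨E, hE, hfin, rfl⟩, hr⟩ : ∃ r ∈ {r : ℝ | ∃ E : Submodule ℝ Y,
      IsClosed (E : Set Y) ∧ FiniteDimensional ℝ (Y ⧸ E) ∧ r = sInf {m : ℝ | ∃ z : Y,
        z ∈ E ∧ ‖z‖ = 1 ∧ m = max ‖y + t • z‖ ‖y - t • z‖} - 1}, 0 < r := by
    by_contra! h
    exact (hY y hy t ht).not_ge (Real.sSup_nonpos h)
  refine ⟨E, hE, hfin, _, hr, fun z hz htz => ?_⟩
  have hz₀ : 0 < ‖z‖ := ht.trans_le htz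
  have hscale : t • ‖z‖⁻¹ • z = (t / ‖z‖) • z := by rw [smul_smul, div_eq_mul_inv]
  calc 1 + (sInf {m : ℝ | ∃ z : Y, z ∈ E ∧ ‖z‖ = 1 ∧ m = max ‖y + t • z‖ ‖y - t • z‖} - 1)
      ≤ max ‖y + t • ‖z‖⁻¹ • z‖ ‖y - t • ‖z‖⁻¹ • z‖ := by
        rw [add_sub_cancel]
        refine csInf_le ⟨0, ?_⟩ ⟨‖z‖⁻¹ • z, E.smul_mem _ hz, ?_, rfl⟩
        · rintro _ ⟨w, -, -, rfl⟩
          exact le_max_of_le_left (norm_nonneg _)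
        · rw [norm_smul, norm_inv, norm_norm, inv_mul_cancel₀ hz₀.ne']
    _ ≤ max ‖y + z‖ ‖y - z‖ := by
      rw [hscale]
      exact max_norm_add_smul_le y z (by rwa [abs_of_pos (by positivity), div_le_one hz₀])

theorem LocallyAMUC.tendsto_zero_of_norm_add_le_one (hY : LocallyAMUC Y) {y : Y} (hy : ‖y‖ = 1)
    {ι : Type*} {l : Filter ι} {u : ι → Y}
    (hu : ∀ g : Y →L[ℝ] ℝ, Tendsto (fun k => g (u k)) l (𝓝 0))
    (hyu : ∀ᶠ k in l, ‖y + u k‖ ≤ 1 ∧ ‖y - u k‖ ≤ 1) : Tendsto u l (𝓝 0) := by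
  rw [Metric.tendsto_nhds]
  intro t ht
  obtain ⟨E, hE, hfin, ε, hε, hmax⟩ := hY.exists_subspace hy (half_pos ht)
  filter_upwards [hyu, eventually_exists_mem_norm_sub_lt hu E (lt_min hε (half_pos ht))]
    with k ⟨hadd, hsub⟩ ⟨z, hz, hzu⟩
  rw [lt_min_iff] at hzu
  by_contra! htu
  rw [dist_zero_right] at htu
  have htz : t / 2 ≤ ‖z‖ := by linarith [norm_sub_norm_le (u k) z]
  refine (hmax z hz htz).not_gt (max_lt ?_ ?_)
  · calc ‖y + z‖ = ‖(y + u k) - (u k - z)‖ := by abel_nf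
      _ < 1 + ε := (norm_sub_le _ _).trans_lt (by linarith)
  · calc ‖y - z‖ = ‖(y - u k) + (u k - z)‖ := by abel_nf
      _ < 1 + ε := (norm_add_le _ _).trans_lt (by linarith)

/-- Around every point of the unit ball, the ball contains segments of some fixed length in the
directions of all but finitely many `e k`. This flatness is incompatible with local AMUC in the
range of a norm-attaining operator. -/
def IsEventuallyFlat (e : ℕ → X) : Prop :=
  ∀ x : X, ‖x‖ ≤ 1 → ∃ δ : ℝ, 0 < δ ∧ ∀ᶠ k in atTop, ‖x + δ • e k‖ ≤ 1 ∧ ‖x - δ • e k‖ ≤ 1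

theorem IsEventuallyFlat.tendsto_apply_of_mem_normAttainingOps {e : ℕ → X}
    (he : IsEventuallyFlat e) (hw : ∀ g : X →L[ℝ] ℝ, Tendsto (fun k => g (e k)) atTop (𝓝 0))
    (hY : LocallyAMUC Y) {T : X →L[ℝ] Y} (hT : T ∈ NormAttainingOps X Y) :
    Tendsto (fun k => T (e k)) atTop (𝓝 0) := by
  obtain ⟨x, hx, hTx⟩ := hT
  rcases eq_or_ne T 0 with rfl | hT₀
  · simp
  have hnorm : 0 < ‖T‖ := norm_pos_iff.2 hT₀
  obtain ⟨δ, hδ, hflat⟩ := he x hx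
  let U : X →L[ℝ] Y := ‖T‖⁻¹ • T
  have hU {v : X} (hv : ‖v‖ ≤ 1) : ‖U v‖ ≤ 1 := by
    simpa [U, norm_smul, inv_mul_le_iff₀ hnorm] using T.le_opNorm_of_le hv
  have hUx : ‖U x‖ = 1 := by simp [U, norm_smul, hTx, hnorm.ne']
  have hlim : Tendsto (fun k => U (δ • e k)) atTop (𝓝 0) := by
    refine hY.tendsto_zero_of_norm_add_le_one hUx
      (fun g => by simpa using (hw (g.comp U)).const_mul δ) (hflat.mono fun k hk => ?_)
    rw [← map_add, ← map_sub]
    exact ⟨hU hk.1, hU hk.2⟩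
  have hrescale (k : ℕ) : T (e k) = (‖T‖ * δ⁻¹) • U (δ • e k) := by
    have hcancel : ‖T‖ * δ⁻¹ * (δ * ‖T‖⁻¹) = 1 := by field_simp
    simp [U, smul_smul, hcancel]
  simpa [hrescale] using hlim.const_smul (‖T‖ * δ⁻¹)

theorem LocallyAMUC.not_propertyB_of_isEventuallyFlat (hY : LocallyAMUC Y) {X : Type}
    [NormedAddCommGroup X] [NormedSpace ℝ X] [CompleteSpace X] {e : ℕ → X}
    (he : IsEventuallyFlat e) (hw : ∀ g : X →L[ℝ] ℝ, Tendsto (fun k => g (e k)) atTop (𝓝 0))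
    {R : ℝ} (hR : ∀ k, ‖e k‖ ≤ R) {S : X →L[ℝ] Y}
    (hS : ¬Tendsto (fun k => S (e k)) atTop (𝓝 0)) : ¬PropertyB Y := by
  intro hB
  refine hS (Metric.tendsto_nhds.2 fun ε hε => ?_)
  have hR₀ : 0 ≤ R := (norm_nonneg _).trans (hR 0)
  have hradius : 0 < ε / (2 * (R + 1)) := by positivity
  obtain ⟨T, hT, hST⟩ :=
    (hB X inferInstance inferInstance inferInstance).exists_dist_lt S hradius
  have hlim := he.tendsto_apply_of_mem_normAttainingOps hw hY hT
  filter_upwards [(tendsto_zero_iff_norm_tendsto_zero.1 hlim).eventually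
    (gt_mem_nhds (half_pos hε))] with k hk
  have hdiff : ‖(S - T) (e k)‖ < ε / 2 := by
    calc ‖(S - T) (e k)‖ ≤ ‖S - T‖ * ‖e k‖ := (S - T).le_opNorm _
      _ ≤ ‖S - T‖ * (R + 1) := by gcongr; linarith [hR k]
      _ < ε / (2 * (R + 1)) * (R + 1) := by gcongr; rwa [← dist_eq_norm]
      _ = ε / 2 := by field_simp
  rw [dist_zero_right]
  calc ‖S (e k)‖ = ‖(S - T) (e k) + T (e k)‖ := by simp
    _ ≤ ‖(S - T) (e k)‖ + ‖T (e k)‖ := norm_add_le _ _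
    _ < ε := by linarith

end MidpointConvexity

section Marcinkiewicz

open scoped ENNReal

/-- The ambient space of the Marcinkiewicz spaces: a sequence `x` is encoded as the family of its
restrictions to the finite sets `A`, scaled by `1 / W #A`, and the supremum of their `ℓ₁` norms is
then the Marcinkiewicz norm of `x`. -/
abbrev RestrictionFamily : Type :=
  lp (fun A : Finset ℕ => PiLp 1 fun _ : A => ℝ) ∞

/-- The `i`th entry of the member indexed by `A`, as a continuous functional. -/
noncomputable def RestrictionFamily.entry (A : Finset ℕ) (i : A) : RestrictionFamily →L[ℝ] ℝ :=
  (PiLp.proj 1 (fun _ : A => ℝ) i).comp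
    (lp.evalCLM ℝ (fun A : Finset ℕ => PiLp 1 fun _ : A => ℝ) ∞ A)

lemma RestrictionFamily.entry_apply (A : Finset ℕ) (i : A) (x : RestrictionFamily) :
    entry A i x = x A i := rfl

/-- The growth functions `W` for which we form the space of sequences `x` with
`∑_{i ∈ A} |x i| ≤ D * W #A` for all finite `A`. -/
structure IsMarcinkiewiczWeight (W : ℕ → ℝ) : Prop where
  zero : W 0 = 0
  strictMono : StrictMono W
  tendsto_atTop : Tendsto W atTop atTop

namespace IsMarcinkiewiczWeight

variable {W : ℕ → ℝ}

lemma pos (hW : IsMarcinkiewiczWeight W) {n : ℕ} (hn : 0 < n) : 0 < W n :=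
  hW.zero ▸ hW.strictMono hn

lemma nonneg (hW : IsMarcinkiewiczWeight W) (n : ℕ) : 0 ≤ W n :=
  hW.zero ▸ hW.strictMono.monotone n.zero_le

lemma exists_finset_forall_sum_add_le (hW : IsMarcinkiewiczWeight W) {c : ℕ → ℝ}
    (hc₀ : ∀ i, 0 ≤ c i) (hc : ∀ A : Finset ℕ, ∑ i ∈ A, c i ≤ W A.card)
    (hhalf : ∃ N : ℕ, ∀ A : Finset ℕ, N ≤ A.card → ∑ i ∈ A, c i ≤ W A.card / 2) :
    ∃ P : Finset ℕ, (∀ i ∈ P, 0 < c i) ∧ ∃ δ > 0, ∀ A : Finset ℕ, P.card < A.card →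
      ∑ i ∈ A, c i + δ ≤ W A.card := by
  by_cases hfin : {i | 0 < c i}.Finite
  · obtain ⟨P, hP⟩ := hfin.exists_finset
    refine ⟨P, fun i hi => (hP i).1 hi, W (P.card + 1) - W P.card,
      sub_pos.2 (hW.strictMono P.card.lt_succ_self), fun A hA => ?_⟩
    have hinter : ∑ i ∈ A, c i = ∑ i ∈ A ∩ P, c i :=
      (Finset.sum_subset Finset.inter_subset_left fun i hi hiP =>
        (hc₀ i).antisymm' (not_lt.1 fun h => hiP (Finset.mem_inter.2 ⟨hi, (hP i).2 h⟩))).symm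
    rw [hinter]
    linarith [hc (A ∩ P), hW.strictMono.monotone hA,
      hW.strictMono.monotone (Finset.card_le_card (Finset.inter_subset_right (s₁ := A) (s₂ := P)))]
  · obtain ⟨N, hN⟩ := hhalf
    obtain ⟨P, hP, rfl⟩ := Set.Infinite.exists_subset_card_eq hfin N
    refine ⟨P, fun i hi => hP hi, W 1 / 2, half_pos (hW.pos one_pos), fun A hA => ?_⟩
    linarith [hN A hA.le, hW.strictMono.monotone (show 1 ≤ A.card by lia)]

lemma exists_eventually_sum_add_le (hW : IsMarcinkiewiczWeight W) {c : ℕ → ℝ} (hc₀ : ∀ i, 0 ≤ c i)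
    (hlim : Tendsto c atTop (𝓝 0)) (hc : ∀ A : Finset ℕ, ∑ i ∈ A, c i ≤ W A.card)
    (hhalf : ∃ N : ℕ, ∀ A : Finset ℕ, N ≤ A.card → ∑ i ∈ A, c i ≤ W A.card / 2) :
    ∃ δ > 0, ∀ᶠ k in atTop, ∀ A : Finset ℕ, k ∈ A → ∑ i ∈ A, c i + δ ≤ W A.card := by
  obtain ⟨P, hP, δ, hδ, hcard⟩ := hW.exists_finset_forall_sum_add_le hc₀ hc hhalf
  obtain ⟨μ, hμ, hμP⟩ : ∃ μ > 0, ∀ i ∈ P, μ ≤ c i := by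
    rcases P.eq_empty_or_nonempty with rfl | hne
    · exact ⟨1, one_pos, by simp⟩
    · obtain ⟨j, hj, hjmin⟩ := P.exists_min_image c hne
      exact ⟨c j, hP j hj, hjmin⟩
  refine ⟨min δ (μ / 2), lt_min hδ (half_pos hμ), ?_⟩
  filter_upwards [hlim.eventually (gt_mem_nhds (half_pos hμ))] with k hk A hkA
  rcases lt_or_ge P.card A.card with hPA | hAP
  · linarith [hcard A hPA, min_le_left δ (μ / 2)]
  -- Trading `k` for some `i ∈ P` outside `A` raises the sum by `c i - c k ≥ μ / 2`.
  obtain ⟨i, hiP, hiA⟩ : ∃ i ∈ P, i ∉ A.erase k := by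
    refine Finset.not_subset.1 fun hsub => ?_
    have := Finset.card_le_card hsub
    have := Finset.card_erase_lt_of_mem hkA
    lia
  have hswap := hc (insert i (A.erase k))
  rw [Finset.card_insert_of_notMem hiA, Finset.card_erase_add_one hkA,
    Finset.sum_insert hiA] at hswap
  linarith [Finset.add_sum_erase A c hkA, hμP i hiP, min_le_right δ (μ / 2)]

lemma norm_toLp_ite_le (hW : IsMarcinkiewiczWeight W) (k : ℕ) (A : Finset ℕ) :
    ‖(WithLp.toLp 1 fun i => if (i : ℕ) = k then (W A.card)⁻¹ else 0 : PiLp 1 fun _ : A => ℝ)‖ ≤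
      (W 1)⁻¹ := by
  have hsum : ‖(WithLp.toLp 1 fun i => if (i : ℕ) = k then (W A.card)⁻¹ else 0 :
      PiLp 1 fun _ : A => ℝ)‖ = ∑ i ∈ A, ‖if i = k then (W A.card)⁻¹ else 0‖ := by
    rw [PiLp.norm_eq_of_L1]
    exact Finset.sum_coe_sort A fun i => ‖if i = k then (W A.card)⁻¹ else 0‖
  simp only [hsum, apply_ite norm, norm_zero, Finset.sum_ite_eq']
  split_ifs with hk
  · rw [Real.norm_of_nonneg (inv_nonneg.2 (hW.nonneg _))]
    exact inv_anti₀ (hW.pos one_pos) (hW.strictMono.monotone (Finset.card_pos.2 ⟨k, hk⟩))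
  · exact inv_nonneg.2 (hW.nonneg 1)

/-- The `k`th unit vector, as a `RestrictionFamily`. -/
noncomputable def basisVec (hW : IsMarcinkiewiczWeight W) (k : ℕ) : RestrictionFamily :=
  ⟨fun A => WithLp.toLp 1 fun i => if (i : ℕ) = k then (W A.card)⁻¹ else 0,
    memℓp_infty ⟨(W 1)⁻¹, Set.forall_mem_range.2 (hW.norm_toLp_ite_le k)⟩⟩

/-- The closure of the finitely supported sequences in the Marcinkiewicz sequence space with
norm `sup_A (∑_{i ∈ A} |x i|) / W #A`. -/
noncomputable def marcinkiewiczSpace (hW : IsMarcinkiewiczWeight W) :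
    Submodule ℝ RestrictionFamily :=
  (Submodule.span ℝ (Set.range hW.basisVec)).topologicalClosure

instance (hW : IsMarcinkiewiczWeight W) : CompleteSpace hW.marcinkiewiczSpace :=
  (Submodule.isClosed_topologicalClosure _).completeSpace_coe

/-- The unit vectors of the Marcinkiewicz space. They are not normalized: their norm is
`1 / W 1`. -/
noncomputable def unitVec (hW : IsMarcinkiewiczWeight W) (k : ℕ) : hW.marcinkiewiczSpace :=
  ⟨hW.basisVec k, Submodule.le_topologicalClosure _ (Submodule.subset_span ⟨k, rfl⟩)⟩

/-- The coordinate functionals of the Marcinkiewicz space. -/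
noncomputable def coord (hW : IsMarcinkiewiczWeight W) (i : ℕ) : hW.marcinkiewiczSpace →L[ℝ] ℝ :=
  W 1 • (RestrictionFamily.entry {i} ⟨i, Finset.mem_singleton_self i⟩).comp
    hW.marcinkiewiczSpace.subtypeL

variable (hW : IsMarcinkiewiczWeight W)

lemma dense_span_unitVec :
    Dense (Submodule.span ℝ (Set.range hW.unitVec) : Set hW.marcinkiewiczSpace) := by
  refine Topology.IsInducing.subtypeVal.dense_iff.2 fun x => ?_
  have himage : Subtype.val '' (Submodule.span ℝ (Set.range hW.unitVec) :
      Set hW.marcinkiewiczSpace) = Submodule.span ℝ (Set.range hW.basisVec) := by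
    have hmap := Submodule.map_span hW.marcinkiewiczSpace.subtype (Set.range hW.unitVec)
    rw [← Set.range_comp] at hmap
    exact congrArg SetLike.coe hmap
  exact himage ▸ x.2

lemma coord_unitVec (i k : ℕ) : hW.coord i (hW.unitVec k) = if i = k then 1 else 0 := by
  have hW₁ : W 1 ≠ 0 := (hW.pos one_pos).ne'
  simp [coord, unitVec, basisVec, RestrictionFamily.entry_apply, hW₁]

lemma coord_sum_smul_unitVec (F : Finset ℕ) (v : ℕ → ℝ) (i : ℕ) :
    hW.coord i (∑ k ∈ F, v k • hW.unitVec k) = if i ∈ F then v i else 0 := by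
  simp [coord_unitVec]

lemma apply_eq_coord_div (x : hW.marcinkiewiczSpace) (A : Finset ℕ) (i : A) :
    (x : RestrictionFamily) A i = hW.coord i x / W A.card := by
  have heq : (RestrictionFamily.entry A i).comp hW.marcinkiewiczSpace.subtypeL =
      (W A.card)⁻¹ • hW.coord i := by
    refine ContinuousLinearMap.ext_on hW.dense_span_unitVec ?_
    rintro _ ⟨k, rfl⟩
    rw [smul_apply, coord_unitVec]
    simp [unitVec, basisVec, RestrictionFamily.entry_apply]
  simpa [div_eq_inv_mul, RestrictionFamily.entry_apply] using DFunLike.congr_fun heq x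

theorem norm_le_iff {x : hW.marcinkiewiczSpace} {D : ℝ} (hD : 0 ≤ D) :
    ‖x‖ ≤ D ↔ ∀ A : Finset ℕ, ∑ i ∈ A, |hW.coord i x| ≤ D * W A.card := by
  have hnorm (A : Finset ℕ) : ‖(x : RestrictionFamily) A‖ =
      (∑ i ∈ A, |hW.coord i x|) / W A.card := by
    simp only [PiLp.norm_eq_of_L1, apply_eq_coord_div, Real.norm_eq_abs, abs_div,
      abs_of_nonneg (hW.nonneg A.card), Finset.sum_div]
    exact Finset.sum_coe_sort A fun i => |hW.coord i x| / W A.card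
  have hdiv (A : Finset ℕ) : (∑ i ∈ A, |hW.coord i x|) / W A.card ≤ D ↔
      ∑ i ∈ A, |hW.coord i x| ≤ D * W A.card := by
    rcases A.eq_empty_or_nonempty with rfl | hA
    · simp [hW.zero, hD]
    · exact div_le_iff₀ (hW.pos hA.card_pos)
  simp only [← hdiv, ← hnorm]
  exact ⟨fun h A => (lp.norm_apply_le_norm ENNReal.top_ne_zero _ A).trans h,
    lp.norm_le_of_forall_le hD⟩

lemma sum_abs_coord_le (x : hW.marcinkiewiczSpace) (A : Finset ℕ) :
    ∑ i ∈ A, |hW.coord i x| ≤ ‖x‖ * W A.card :=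
  (hW.norm_le_iff (norm_nonneg x)).1 le_rfl A

lemma norm_unitVec_le (k : ℕ) : ‖hW.unitVec k‖ ≤ (W 1)⁻¹ :=
  lp.norm_le_of_forall_le (inv_nonneg.2 (hW.nonneg 1)) (hW.norm_toLp_ite_le k)

lemma exists_sum_abs_coord_le_of_disjoint (x : hW.marcinkiewiczSpace) {ε : ℝ} (hε : 0 < ε) :
    ∃ F : Finset ℕ, ∀ A, Disjoint A F → ∑ i ∈ A, |hW.coord i x| ≤ ε * W A.card := by
  obtain ⟨z, hz, hxz⟩ := hW.dense_span_unitVec.exists_dist_lt x hε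
  obtain ⟨v, rfl⟩ := Finsupp.mem_span_range_iff_exists_finsupp.1 hz
  refine ⟨v.support, fun A hA => ?_⟩
  calc ∑ i ∈ A, |hW.coord i x|
      = ∑ i ∈ A, |hW.coord i (x - v.sum fun k a => a • hW.unitVec k)| := by
        refine Finset.sum_congr rfl fun i hi => ?_
        rw [map_sub, Finsupp.sum, coord_sum_smul_unitVec, if_neg (Finset.disjoint_left.1 hA hi),
          sub_zero]
    _ ≤ ε * W A.card :=
      (hW.norm_le_iff hε.le).1 (by rw [← dist_eq_norm]; exact hxz.le) A

lemma tendsto_coord (x : hW.marcinkiewiczSpace) :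
    Tendsto (fun i => |hW.coord i x|) atTop (𝓝 0) := by
  rw [← Nat.cofinite_eq_atTop, Metric.tendsto_nhds]
  intro ε hε
  obtain ⟨F, hF⟩ := hW.exists_sum_abs_coord_le_of_disjoint x
    (div_pos (half_pos hε) (hW.pos one_pos))
  filter_upwards [F.finite_toSet.eventually_cofinite_notMem] with i hi
  have hle := hF {i} (Finset.disjoint_singleton_left.2 hi)
  rw [Finset.sum_singleton, Finset.card_singleton, div_mul_cancel₀ _ (hW.pos one_pos).ne'] at hle
  rw [Real.dist_eq, sub_zero, abs_abs]
  linarith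

lemma exists_forall_sum_abs_coord_le_half (x : hW.marcinkiewiczSpace) :
    ∃ N : ℕ, ∀ A : Finset ℕ, N ≤ A.card → ∑ i ∈ A, |hW.coord i x| ≤ W A.card / 2 := by
  obtain ⟨F, hF⟩ := hW.exists_sum_abs_coord_le_of_disjoint x (ε := 1 / 4) (by norm_num)
  obtain ⟨N, hN⟩ := eventually_atTop.1
    (hW.tendsto_atTop.eventually_ge_atTop (4 * ∑ i ∈ F, |hW.coord i x|))
  refine ⟨N, fun A hA => ?_⟩
  have hinter : ∑ i ∈ A ∩ F, |hW.coord i x| ≤ ∑ i ∈ F, |hW.coord i x| :=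
    Finset.sum_le_sum_of_subset_of_nonneg Finset.inter_subset_right fun _ _ _ => abs_nonneg _
  have hmono : W (A \ F).card ≤ W A.card :=
    hW.strictMono.monotone (Finset.card_le_card Finset.sdiff_subset)
  rw [← Finset.sum_inter_add_sum_sdiff A F]
  linarith [hF (A \ F) Finset.sdiff_disjoint, hN _ hA]

theorem hasSublinearSums_unitVec : HasSublinearSums hW.unitVec := by
  intro ε hε
  obtain ⟨m, hm⟩ := (hW.tendsto_atTop.eventually_ge_atTop ε⁻¹).exists
  have hW₁ : 0 < W 1 := hW.pos one_pos
  obtain ⟨n, hn⟩ := exists_nat_ge (m / (ε * W 1))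
  have hmn : (m : ℝ) ≤ ε * (n + 1) * W 1 := by
    rw [div_le_iff₀ (by positivity)] at hn
    nlinarith
  refine ⟨n + 1, n.succ_pos, fun A hA => ?_⟩
  refine (hW.norm_le_iff (by positivity)).2 fun B => ?_
  have hcoord : ∑ i ∈ B, |hW.coord i (∑ k ∈ A, hW.unitVec k)| = (B ∩ A).card := by
    have h := hW.coord_sum_smul_unitVec A 1
    simp only [Pi.one_apply, one_smul] at h
    simp [h, apply_ite abs]
  rw [hcoord]
  rcases le_or_gt m B.card with hmB | hBm
  · have hB : ε⁻¹ ≤ W B.card := hm.trans (hW.strictMono.monotone hmB)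
    calc ((B ∩ A).card : ℝ) ≤ (n + 1 : ℕ) :=
          mod_cast (Finset.card_le_card Finset.inter_subset_right).trans hA
      _ = ε * (n + 1 : ℕ) * ε⁻¹ := by field_simp
      _ ≤ ε * (n + 1 : ℕ) * W B.card := by gcongr
  rcases B.eq_empty_or_nonempty with rfl | hB
  · simp [hW.zero]
  calc ((B ∩ A).card : ℝ) ≤ m :=
        mod_cast (Finset.card_le_card Finset.inter_subset_left).trans hBm.le
    _ ≤ ε * (n + 1 : ℕ) * W 1 := by exact_mod_cast hmn
    _ ≤ ε * (n + 1 : ℕ) * W B.card := by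
      gcongr
      exact hW.strictMono.monotone hB.card_pos

theorem isEventuallyFlat_unitVec : IsEventuallyFlat hW.unitVec := by
  intro x hx
  have hsum (A : Finset ℕ) : ∑ i ∈ A, |hW.coord i x| ≤ W A.card := by
    simpa using (hW.norm_le_iff zero_le_one).1 hx A
  obtain ⟨δ, hδ, hslack⟩ := hW.exists_eventually_sum_add_le (fun i => abs_nonneg _)
    (hW.tendsto_coord x) hsum (hW.exists_forall_sum_abs_coord_le_half x)
  refine ⟨δ, hδ, hslack.mono fun k hk => ?_⟩
  have hle {s : ℝ} (hs : |s| ≤ δ) : ‖x + s • hW.unitVec k‖ ≤ 1 := by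
    refine (hW.norm_le_iff zero_le_one).2 fun A => ?_
    rw [one_mul]
    have hcoord (i : ℕ) : |hW.coord i (x + s • hW.unitVec k)| ≤
        |hW.coord i x| + if i = k then δ else 0 := by
      rw [map_add, map_smul, coord_unitVec, smul_eq_mul, mul_ite, mul_one, mul_zero]
      refine (abs_add_le _ _).trans ?_
      gcongr
      split_ifs <;> simp [hs]
    refine (Finset.sum_le_sum fun i _ => hcoord i).trans ?_
    rw [Finset.sum_add_distrib, Finset.sum_ite_eq']
    split_ifs with hkA
    · exact hk A hkA
    · simpa using hsum A
  refine ⟨hle (abs_of_pos hδ).le, ?_⟩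
  rw [sub_eq_add_neg, ← neg_smul]
  exact hle (by rw [abs_neg, abs_of_pos hδ])

end IsMarcinkiewiczWeight

end Marcinkiewicz

section TruncationWeight

/-- The Marcinkiewicz weight `n ↦ ∑ⱼ min(n, Nⱼ) / Nⱼ`, to be used with `N` growing at least
geometrically. -/
noncomputable def truncationWeight (N : ℕ → ℕ) (n : ℕ) : ℝ :=
  ∑' j, (min n (N j) : ℕ) / (N j : ℝ)

variable {N : ℕ → ℕ}

lemma summable_min_div (hN : ∀ j, 2 ^ j ≤ N j) (n : ℕ) :
    Summable fun j => ((min n (N j) : ℕ) : ℝ) / N j := by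
  refine .of_nonneg_of_le (fun j => by positivity) (fun j => ?_)
    (summable_geometric_two.mul_left (n : ℝ))
  calc ((min n (N j) : ℕ) : ℝ) / N j ≤ n / 2 ^ j := by
        gcongr
        · exact min_le_left _ _
        · exact_mod_cast hN j
    _ = n * (1 / 2) ^ j := by rw [one_div, inv_pow, div_eq_mul_inv]

theorem isMarcinkiewiczWeight_truncationWeight (hN : ∀ j, 2 ^ j ≤ N j) :
    IsMarcinkiewiczWeight (truncationWeight N) where
  zero := by simp [truncationWeight]
  strictMono := by
    refine strictMono_nat_of_lt_succ fun n => ?_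
    have hn : n < N n := n.lt_two_pow_self.trans_le (hN n)
    refine (summable_min_div hN n).tsum_lt_tsum (i := n) (fun j => ?_) ?_
      (summable_min_div hN (n + 1))
    · gcongr
      exact n.le_succ
    · rw [min_eq_left hn.le, min_eq_left hn]
      gcongr
      · exact_mod_cast hn.pos
      · exact n.lt_succ_self
  tendsto_atTop := by
    refine tendsto_atTop.2 fun c => ?_
    obtain ⟨J, hJ⟩ := exists_nat_ge c
    filter_upwards [eventually_all_finset (Finset.range J) |>.2 fun j _ =>
      eventually_ge_atTop (N j)] with n hn
    calc c ≤ J := hJ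
      _ = ∑ j ∈ Finset.range J, ((min n (N j) : ℕ) : ℝ) / N j := by
        rw [Finset.sum_congr rfl (g := fun _ => 1), Finset.sum_const, Finset.card_range,
          nsmul_one]
        intro j hj
        have : 0 < N j := (pow_pos two_pos j).trans_le (hN j)
        rw [min_eq_right (hn j hj), div_self (by positivity)]
      _ ≤ truncationWeight N n :=
        (summable_min_div hN n).sum_le_tsum _ fun j _ => by positivity

lemma sum_sub_const_le_of_card_le {ι : Type*} {F A : Finset ι} (hA : A ⊆ F)
    {b : ι → ℝ} {c θ : ℝ} {m : ℕ} (hc : ∀ i ∈ F, c ≤ b i) (hAm : A.card ≤ m) (hmF : m ≤ F.card)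
    (hb : ∀ B ⊆ F, B.card ≤ m → ∑ i ∈ B, b i ≤ θ) :
    ∑ i ∈ A, (b i - c) ≤ θ - c * m := by
  obtain ⟨B, hAB, hBF, rfl⟩ := Finset.exists_subsuperset_card_eq hA hAm hmF
  calc ∑ i ∈ A, (b i - c) ≤ ∑ i ∈ B, (b i - c) :=
        Finset.sum_le_sum_of_subset_of_nonneg hAB fun i hi _ => sub_nonneg.2 (hc i (hBF hi))
    _ = ∑ i ∈ B, b i - c * B.card := by
      rw [Finset.sum_sub_distrib, Finset.sum_const, nsmul_eq_mul, mul_comm]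
    _ ≤ θ - c * B.card := by gcongr; exact hb B hBF le_rfl

/-- A discrete layer-cake argument: peel off the constant `min b` and the index where it is
attained. -/
theorem sum_mul_le_mul_tsum {ι : Type*} (hN : ∀ j, 2 ^ j ≤ N j) {v : ι → ℝ}
    {D : ℝ} (hD : 0 ≤ D) (F : Finset ι) {b : ι → ℝ} {θ : ℕ → ℝ} (hb₀ : ∀ i ∈ F, 0 ≤ b i)
    (hv : ∀ A ⊆ F, ∑ i ∈ A, v i ≤ D * truncationWeight N A.card)
    (hb : ∀ j, ∀ A ⊆ F, A.card ≤ N j → ∑ i ∈ A, b i ≤ θ j) (hθ : Summable fun j => θ j / N j) :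
    ∑ i ∈ F, v i * b i ≤ D * ∑' j, θ j / N j := by
  classical
  induction F using Finset.strongInduction generalizing b θ with
  | H F ih =>
    rcases F.eq_empty_or_nonempty with rfl | hF
    · have hθ₀ (j : ℕ) : 0 ≤ θ j := by simpa using hb j ∅ le_rfl (by simp)
      simpa using mul_nonneg hD (tsum_nonneg fun j => div_nonneg (hθ₀ j) (N j).cast_nonneg)
    obtain ⟨i₀, hi₀, hmin⟩ := F.exists_min_image b hF
    let c := b i₀
    let θ' (j : ℕ) : ℝ := θ j - c * (min F.card (N j) : ℕ)
    have hθ' : (fun j => θ' j / N j) =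
        fun j => θ j / N j - c * (((min F.card (N j) : ℕ) : ℝ) / N j) := by
      ext j
      rw [sub_div, mul_div_assoc]
    have hsub : F.erase i₀ ⊆ F := F.erase_subset i₀
    have hrest : ∑ i ∈ F.erase i₀, v i * (b i - c) ≤ D * ∑' j, θ' j / N j := by
      refine ih _ (Finset.erase_ssubset hi₀) (fun i hi => sub_nonneg.2 (hmin i (hsub hi)))
        (fun A hA => hv A (hA.trans hsub)) (fun j A hA hAj => ?_) ?_
      · exact sum_sub_const_le_of_card_le (hA.trans hsub) hmin
          (le_min (Finset.card_le_card (hA.trans hsub)) hAj) (min_le_left _ _)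
          fun B hB hBm => hb j B hB (hBm.trans (min_le_right _ _))
      · rw [hθ']
        exact hθ.sub ((summable_min_div hN _).mul_left c)
    have hpeel : ∑ i ∈ F, v i * b i = ∑ i ∈ F.erase i₀, v i * (b i - c) + c * ∑ i ∈ F, v i := by
      rw [Finset.sum_erase F (by simp [c]), Finset.mul_sum, ← Finset.sum_add_distrib]
      exact Finset.sum_congr rfl fun i _ => by ring
    have hconst : c * ∑ i ∈ F, v i ≤ c * (D * truncationWeight N F.card) :=
      mul_le_mul_of_nonneg_left (hv F le_rfl) (hb₀ i₀ hi₀)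
    rw [hθ', (hθ.tsum_sub ((summable_min_div hN _).mul_left c)), tsum_mul_left] at hrest
    rw [hpeel]
    simp only [truncationWeight] at hconst
    linarith

variable {Y : Type*} [NormedAddCommGroup Y] [NormedSpace ℝ Y] {y : ℕ → Y}

theorem norm_sum_smul_le_of_truncationWeight (hN : ∀ j, 2 ^ j ≤ N j)
    (hy : ∀ j, ∀ A : Finset ℕ, A.card ≤ N j → ‖∑ k ∈ A, y k‖ ≤ (1 / 2) ^ j * N j)
    {F : Finset ℕ} {v : ℕ → ℝ} {D : ℝ} (hD : 0 ≤ D)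
    (hv : ∀ A ⊆ F, ∑ i ∈ A, |v i| ≤ D * truncationWeight N A.card) :
    ‖∑ i ∈ F, v i • y i‖ ≤ 4 * D := by
  obtain ⟨g, hg, hgF⟩ := exists_dual_vector'' ℝ (∑ i ∈ F, v i • y i)
  let θ (j : ℕ) : ℝ := 2 * (1 / 2) ^ j * N j
  have hdiv : (fun j => θ j / N j) = fun j => 2 * (1 / 2 : ℝ) ^ j := by
    ext j
    have : 0 < N j := (pow_pos two_pos j).trans_le (hN j)
    exact mul_div_cancel_right₀ _ (by positivity)
  have hθ (j : ℕ) (A : Finset ℕ) (hA : A.card ≤ N j) : ∑ i ∈ A, |g (y i)| ≤ θ j :=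
    calc ∑ i ∈ A, |g (y i)| ≤ 2 * (‖g‖ * ((1 / 2) ^ j * N j)) :=
          sum_abs_apply_le g fun B hB => hy j B ((Finset.card_le_card hB).trans hA)
      _ ≤ 2 * (1 * ((1 / 2) ^ j * N j)) := by gcongr
      _ = θ j := by ring
  calc ‖∑ i ∈ F, v i • y i‖ = ∑ i ∈ F, v i * g (y i) := by
        simpa using hgF.symm
    _ ≤ ∑ i ∈ F, |v i| * |g (y i)| := by
      refine Finset.sum_le_sum fun i _ => ?_
      rw [← abs_mul]
      exact le_abs_self _
    _ ≤ D * ∑' j, θ j / N j :=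
      sum_mul_le_mul_tsum hN hD F (fun i _ => abs_nonneg _) hv (fun j A _ => hθ j A)
        (hdiv ▸ summable_geometric_two.mul_left 2)
    _ = 4 * D := by
      rw [hdiv, tsum_mul_left, tsum_geometric_two]
      ring

end TruncationWeight

section Operator

variable {Y : Type*} [NormedAddCommGroup Y] [NormedSpace ℝ Y] [CompleteSpace Y] {y : ℕ → Y}

theorem IsMarcinkiewiczWeight.exists_clm_apply_unitVec {W : ℕ → ℝ} (hW : IsMarcinkiewiczWeight W)
    {C : ℝ} (hy : ∀ {F : Finset ℕ} {v : ℕ → ℝ} {D : ℝ}, 0 ≤ D →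
      (∀ A ⊆ F, ∑ i ∈ A, |v i| ≤ D * W A.card) → ‖∑ i ∈ F, v i • y i‖ ≤ C * D) :
    ∃ S : hW.marcinkiewiczSpace →L[ℝ] Y, ∀ k, S (hW.unitVec k) = y k := by
  let f : (ℕ →₀ ℝ) →ₗ[ℝ] Y := Finsupp.linearCombination ℝ y
  let e : (ℕ →₀ ℝ) →ₗ[ℝ] hW.marcinkiewiczSpace := Finsupp.linearCombination ℝ hW.unitVec
  have hdense : DenseRange e := by
    have hrange : Set.range e = Submodule.span ℝ (Set.range hW.unitVec) := by
      rw [← Finsupp.range_linearCombination, LinearMap.coe_range]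
    rw [DenseRange, hrange]
    exact hW.dense_span_unitVec
  have hbound (v : ℕ →₀ ℝ) : ‖f v‖ ≤ C * ‖e v‖ := by
    refine hy (norm_nonneg _) fun A hA => ?_
    refine (Finset.sum_congr rfl fun i hi => ?_).trans_le (hW.sum_abs_coord_le (e v) A)
    simp only [e, Finsupp.linearCombination_apply, Finsupp.sum, hW.coord_sum_smul_unitVec,
      if_pos (hA hi), LinearMap.id_apply]
  exact ⟨f.extendOfNorm e, fun k => by
    simpa [f, e] using LinearMap.extendOfNorm_eq hdense ⟨C, hbound⟩ (Finsupp.single k 1)⟩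

theorem locallyAMUC_fails_propertyB_general (hY : LocallyAMUC Y) (hy : ∀ n, ‖y n‖ = 1)
    (hsub : HasSublinearSums y) : ¬PropertyB Y := by
  choose N hN₀ hN using fun j : ℕ => hsub ((1 / 2) ^ j) (by positivity)
  have hpow (j : ℕ) : 2 ^ j ≤ N j := by
    have hle := hN j {0} (hN₀ j)
    rw [Finset.sum_singleton, hy, one_div, inv_pow, inv_mul_eq_div,
      le_div_iff₀ (by positivity), one_mul] at hle
    exact_mod_cast hle
  have hW := isMarcinkiewiczWeight_truncationWeight hpow
  obtain ⟨S, hS⟩ := hW.exists_clm_apply_unitVec (norm_sum_smul_le_of_truncationWeight hpow hN)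
  refine hY.not_propertyB_of_isEventuallyFlat hW.isEventuallyFlat_unitVec
    hW.hasSublinearSums_unitVec.tendsto_apply hW.norm_unitVec_le (S := S) fun hlim => ?_
  have hlim_norm := hlim.norm
  simp only [hS, hy, norm_zero] at hlim_norm
  exact one_ne_zero (tendsto_nhds_unique tendsto_const_nhds hlim_norm)

end Operator

/-- Theorem A: a locally AMUC Banach space `Y` having either a normalized
symmetric basic sequence not equivalent to the unit vector basis of `ℓ₁`, or a normalized
sequence with upper `p`-estimates for some `1 < p < ∞`, fails Lindenstrauss' property B. -/
theorem locallyAMUC_fails_propertyB (Y : Type) [NormedAddCommGroup Y] [NormedSpace ℝ Y]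
    [CompleteSpace Y] (hY : LocallyAMUC Y)
    (h : (∃ y : ℕ → Y, (∀ n, ‖y n‖ = 1) ∧ IsSymmetricBasicSeq y ∧ ¬ EquivL1UnitBasis y) ∨
      (∃ p : ℝ, 1 < p ∧ ∃ y : ℕ → Y, (∀ n, ‖y n‖ = 1) ∧ HasUpperPEstimates p y)) :
    ¬ PropertyB Y := by
  rcases h with ⟨y, hy, hs, hne⟩ | ⟨p, hp, y, hy, hup⟩
  · exact locallyAMUC_fails_propertyB_general hY hy (hs.hasSublinearSums hy hne)
  · exact locallyAMUC_fails_propertyB_general hY hy (hup.hasSublinearSums hp)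
end

section
/- Let Y be a Banach space that does not contain an isomorphic copy of ℓ_1. Suppose that for every y in the unit sphere S_Y and every t > 0 there exists δ > 0 such that limsup_n max{‖y + t z_n‖, ‖y − t z_n‖} ≥ 1 + δ for every weakly null sequence (z_n) in Y with ‖z_n‖ ≥ 1 for all n. Then Y is locally AMUC. -/
open Filter Topology

/-!
If `Y` is infinite-dimensional and `δ̃_Y(y,t) ≤ 0`, every closed finite-codimensional subspace
contains unit vectors `z` with `max {‖y + t z‖, ‖y - t z‖}` as close to `1` as desired. Taking each
new subspace in the kernels of norming functionals of the vectors already chosen yields a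
`1`-separated sequence of such vectors along which the maxima tend to `1`. By Rosenthal's `ℓ₁`
theorem some subsequence is weakly Cauchy. The differences of its consecutive terms are weakly null
of norm at least `1`, and by convexity they contradict the hypothesis at `t / 2`.

Rosenthal's theorem rests on a Ramsey argument for infinite sequences, carried out with a
nonprincipal ultrafilter: for a given family of finite sequences, the branches of some tree whose
successor sets lie in the ultrafilter either all keep their initial segments in the family or all
leave it, and there is a diagonal sequence whose subsequences are, as soon as they start late
enough, branches of countably many such trees.
-/

section Branches

variable {α : Type*}

/-- The finite initial segment `[m 0, …, m (k - 1)]` of a sequence. -/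
def initSeg (m : ℕ → α) (k : ℕ) : List α := (List.range k).map m

@[simp]
theorem initSeg_zero (m : ℕ → α) : initSeg m 0 = [] := rfl

@[simp]
theorem length_initSeg (m : ℕ → α) (k : ℕ) : (initSeg m k).length = k := by simp [initSeg]

@[simp]
theorem getElem_initSeg (m : ℕ → α) {j k : ℕ} (h : j < (initSeg m k).length) :
    (initSeg m k)[j] = m j := by simp [initSeg]

theorem mem_initSeg_of_lt (m : ℕ → α) {j k : ℕ} (h : j < k) : m j ∈ initSeg m k :=
  List.mem_map_of_mem (List.mem_range.2 h)

theorem initSeg_succ (m : ℕ → α) (k : ℕ) : initSeg m (k + 1) = initSeg m k ++ [m k] := by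
  simp [initSeg, List.range_succ]

theorem initSeg_succ_eq_cons (m : ℕ → α) (k : ℕ) :
    initSeg m (k + 1) = m 0 :: initSeg (fun n => m (n + 1)) k := by
  simp [initSeg, List.range_succ_eq_map, Function.comp_def]

theorem initSeg_sublist_of_le (m : ℕ → α) {j k : ℕ} (h : j ≤ k) :
    (initSeg m j).Sublist (initSeg m k) :=
  (List.range_sublist.2 h).map m

theorem initSeg_comp_sublist (m : ℕ → α) {φ : ℕ → ℕ} (hφ : StrictMono φ) (k : ℕ) :
    (initSeg (m ∘ φ) k).Sublist (initSeg m (φ k)) := by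
  induction k with
  | zero => exact List.nil_sublist _
  | succ k ih =>
    have hsnoc : (initSeg (m ∘ φ) (k + 1)).Sublist (initSeg m (φ k + 1)) := by
      simpa only [initSeg_succ, Function.comp_apply] using ih.append (List.Sublist.refl [m (φ k)])
    exact hsnoc.trans (initSeg_sublist_of_le m (hφ k.lt_succ_self))

theorem exists_seq_forall_initSeg {P : List α → α → Prop} (h : ∀ σ, ∃ x, P σ x) :
    ∃ m : ℕ → α, ∀ n, P (initSeg m n) (m n) := by
  choose next hnext using h
  let seg : ℕ → List α := fun n => Nat.rec [] (fun _ σ => σ ++ [next σ]) n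
  have hseg : ∀ n, seg n = initSeg (next ∘ seg) n := by
    intro n
    induction n with
    | zero => rfl
    | succ n ih => rw [initSeg_succ, ← ih]; rfl
  exact ⟨next ∘ seg, fun n => hseg n ▸ hnext (seg n)⟩

/-- `m` is an infinite branch of the tree in which the set of admissible successors of a node `σ`
(a finite sequence) is `T σ`. -/
def IsBranch (T : List α → Set α) (m : ℕ → α) : Prop := ∀ n, m n ∈ T (initSeg m n)

/-- The filter of sequences induced by a filter `l` of admissible successors: a property holds
eventually when it holds on all the branches of some tree whose successor sets all lie in `l`. -/
def branchFilter (l : Filter α) : Filter (ℕ → α) where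
  sets := {s | ∃ T : List α → Set α, (∀ σ, T σ ∈ l) ∧ ∀ m, IsBranch T m → m ∈ s}
  univ_sets := ⟨fun _ => Set.univ, fun _ => univ_mem, fun _ _ => Set.mem_univ _⟩
  sets_of_superset := fun ⟨T, hT, hs⟩ hst => ⟨T, hT, fun m hm => hst (hs m hm)⟩
  inter_sets := fun ⟨T, hT, hs⟩ ⟨T', hT', hs'⟩ =>
    ⟨fun σ => T σ ∩ T' σ, fun σ => inter_mem (hT σ) (hT' σ),
      fun m hm => ⟨hs m fun n => (hm n).1, hs' m fun n => (hm n).2⟩⟩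

theorem eventually_branchFilter {l : Filter α} {p : (ℕ → α) → Prop} :
    (∀ᶠ m in branchFilter l, p m) ↔
      ∃ T : List α → Set α, (∀ σ, T σ ∈ l) ∧ ∀ m, IsBranch T m → p m :=
  Iff.rfl

theorem eventually_branchFilter_of_eventually_head {l : Filter α} {p : α → (ℕ → α) → Prop}
    (h : ∀ᶠ x in l, ∀ᶠ m in branchFilter l, p x m) :
    ∀ᶠ m in branchFilter l, p (m 0) fun n => m (n + 1) := by
  classical
  have hT : ∀ x, ∃ T : List α → Set α, (∀ σ, T σ ∈ l) ∧
      ((∀ᶠ m in branchFilter l, p x m) → ∀ m, IsBranch T m → p x m) := by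
    intro x
    by_cases hx : ∀ᶠ m in branchFilter l, p x m
    · obtain ⟨T, hT, hp⟩ := eventually_branchFilter.1 hx
      exact ⟨T, hT, fun _ => hp⟩
    · exact ⟨fun _ => Set.univ, fun _ => univ_mem, fun h => absurd h hx⟩
  choose T hT hp using hT
  let graft : List α → Set α
    | [] => {x | ∀ᶠ m in branchFilter l, p x m}
    | x :: σ => T x σ
  refine eventually_branchFilter.2 ⟨graft, fun σ => ?_, fun m hm => ?_⟩
  · cases σ with
    | nil => exact h
    | cons x σ => exact hT x σ
  · refine hp (m 0) (hm 0) _ fun n => ?_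
    have := hm (n + 1)
    rwa [initSeg_succ_eq_cons] at this

/-- This is the determinacy of the open game in which the moves are sets of the ultrafilter: from a
position not won by the player who wants to leave `F`, almost every move leads to another one. -/
theorem eventually_forall_initSeg_mem_or_eventually_exists_notMem (U : Ultrafilter α)
    (F : Set (List α)) :
    (∀ᶠ m in branchFilter (U : Filter α), ∀ k, initSeg m k ∈ F) ∨
      ∀ᶠ m in branchFilter (U : Filter α), ∃ k, initSeg m k ∉ F := by
  let Leaves (σ : List α) : Prop :=
    ∀ᶠ m in branchFilter (U : Filter α), ∃ k, σ ++ initSeg m k ∉ F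
  have leaves_of_notMem : ∀ σ, σ ∉ F → Leaves σ := fun σ hσ =>
    Eventually.of_forall fun m => ⟨0, by simpa using hσ⟩
  have leaves_of_eventually : ∀ σ, (∀ᶠ x in (U : Filter α), Leaves (σ ++ [x])) → Leaves σ := by
    intro σ h
    refine (eventually_branchFilter_of_eventually_head h).mono fun m => ?_
    rintro ⟨k, hk⟩
    exact ⟨k + 1, by simpa [initSeg_succ_eq_cons] using hk⟩
  refine or_iff_not_imp_right.2 fun hnil => eventually_branchFilter.2
    ⟨fun σ => {x | ¬ Leaves σ → ¬ Leaves (σ ++ [x])}, fun σ => ?_, fun m hm k => ?_⟩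
  · by_cases hσ : Leaves σ
    · simp [hσ]
    · have := Ultrafilter.eventually_not.2 (mt (leaves_of_eventually σ) hσ)
      exact this.mono fun x hx _ => hx
  · have hstays : ¬ Leaves (initSeg m k) := by
      induction k with
      | zero => exact hnil
      | succ k ih => rw [initSeg_succ]; exact hm k ih
    exact by_contra fun hk => hstays (leaves_of_notMem _ hk)

theorem exists_seq_forall_subseq_of_eventually_branchFilter {ι : Type*} [Countable ι]
    {l : Filter α} [l.NeBot] {p : ι → (ℕ → α) → Prop}
    (h : ∀ i, ∀ᶠ m in branchFilter l, p i m) :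
    ∃ m : ℕ → α, ∀ i, ∃ N, ∀ φ : ℕ → ℕ, StrictMono φ → N ≤ φ 0 → p i (m ∘ φ) := by
  choose T hT hp using fun i => eventually_branchFilter.1 (h i)
  obtain ⟨e, he⟩ := exists_injective_nat ι
  have hnext : ∀ σ : List α, ∃ x, ∀ i, e i ≤ σ.length → ∀ τ, τ.Sublist σ → x ∈ T i τ := by
    intro σ
    have hfin : {i | e i ≤ σ.length}.Finite := (Set.finite_Iic σ.length).preimage he.injOn
    have hsub : {τ : List α | τ.Sublist σ}.Finite := by
      simpa only [List.mem_sublists] using List.finite_toSet σ.sublists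
    have : ∀ᶠ x in l, ∀ i ∈ {i | e i ≤ σ.length}, ∀ τ ∈ {τ : List α | τ.Sublist σ}, x ∈ T i τ :=
      (eventually_all_finite hfin).2 fun i _ => (eventually_all_finite hsub).2 fun τ _ => hT i τ
    exact this.exists
  obtain ⟨m, hm⟩ := exists_seq_forall_initSeg hnext
  refine ⟨m, fun i => ⟨e i, fun φ hφ hi => hp i _ fun n => ?_⟩⟩
  refine hm (φ n) i ?_ _ (initSeg_comp_sublist m hφ n)
  rw [length_initSeg]
  exact hi.trans (hφ.monotone n.zero_le)

theorem eventually_branchFilter_strictMono {l : Filter ℕ} (hl : l ≤ atTop) :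
    ∀ᶠ m in branchFilter l, StrictMono m := by
  refine eventually_branchFilter.2 ⟨fun σ => {n | ∀ a ∈ σ, a < n}, fun σ => hl ?_, fun m hm => ?_⟩
  · exact (eventually_all_finite σ.finite_toSet).2 fun a _ => eventually_gt_atTop a
  · exact strictMono_nat_of_lt_succ fun n => hm (n + 1) _ (mem_initSeg_of_lt m n.lt_succ_self)

/-- The Nash-Williams partition theorem, simultaneously for countably many families of finite
sequences. -/
theorem exists_strictMono_forall_initSeg_mem_or_exists_notMem {ι : Type*} [Countable ι]
    (F : ι → Set (List ℕ)) :
    ∃ m : ℕ → ℕ, StrictMono m ∧ ∀ i, ∃ N,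
      (∀ φ : ℕ → ℕ, StrictMono φ → N ≤ φ 0 → ∀ k, initSeg (m ∘ φ) k ∈ F i) ∨
      ∀ φ : ℕ → ℕ, StrictMono φ → N ≤ φ 0 → ∃ k, initSeg (m ∘ φ) k ∉ F i := by
  let U : Ultrafilter ℕ := hyperfilter ℕ
  let Stays (i : ι) : Prop := ∀ᶠ m in branchFilter (U : Filter ℕ), ∀ k, initSeg m k ∈ F i
  let p : Option ι → (ℕ → ℕ) → Prop
    | none, m => StrictMono m
    | some i, m => (Stays i → ∀ k, initSeg m k ∈ F i) ∧ (¬ Stays i → ∃ k, initSeg m k ∉ F i)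
  have hp : ∀ i, ∀ᶠ m in branchFilter (U : Filter ℕ), p i m := by
    rintro (_ | i)
    · exact eventually_branchFilter_strictMono Nat.hyperfilter_le_atTop
    · rcases em (Stays i) with hi | hi
      · exact hi.mono fun m hm => ⟨fun _ => hm, absurd hi⟩
      · have hleave := eventually_forall_initSeg_mem_or_eventually_exists_notMem U (F i)
        exact (hleave.resolve_left hi).mono fun m hm => ⟨fun h => absurd h hi, fun _ => hm⟩
  obtain ⟨m, hm⟩ := exists_seq_forall_subseq_of_eventually_branchFilter hp
  obtain ⟨N₀, hN₀⟩ := hm none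
  have hshift : StrictMono fun n => n + N₀ := strictMono_id.add_const N₀
  refine ⟨m ∘ fun n => n + N₀, hN₀ _ hshift (Nat.le_add_left _ _), fun i => ?_⟩
  obtain ⟨N, hN⟩ := hm (some i)
  have htail (φ : ℕ → ℕ) (hφ : StrictMono φ) (hφN : N ≤ φ 0) :
      p (some i) (m ∘ (fun n => n + N₀) ∘ φ) :=
    hN _ (hshift.comp hφ) (hφN.trans (Nat.le_add_right _ _))
  refine ⟨N, (em (Stays i)).imp (fun hi φ hφ hφN => ?_) fun hi φ hφ hφN => ?_⟩
  · exact (htail φ hφ hφN).1 hi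
  · exact (htail φ hφ hφN).2 hi

end Branches

section Independence

variable {X : Type*}

/-- Rosenthal's independence of the pairs of sets `{b < g i}`, `{g i < a}`: every pattern of
choices along an initial segment of the indices is realized at some point. -/
def IsIndependentBetween (g : ℕ → X → ℝ) (a b : ℝ) : Prop :=
  ∀ (s : Set ℕ) (k : ℕ), ∃ x, ∀ i < k, (i ∈ s → b < g i x) ∧ (i ∉ s → g i x < a)

/-- The finite sequences of indices along which, at some point, the values of `g` lie alternately
below `a` and above `b`. -/
def alternatingLists (g : ℕ → X → ℝ) (a b : ℝ) : Set (List ℕ) :=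
  {σ | ∃ x, ∀ j (hj : j < σ.length), (Even j → g σ[j] x < a) ∧ (Odd j → b < g σ[j] x)}

theorem initSeg_mem_alternatingLists {g : ℕ → X → ℝ} {a b : ℝ} {φ : ℕ → ℕ} {k : ℕ} :
    initSeg φ k ∈ alternatingLists g a b ↔
      ∃ x, ∀ j < k, (Even j → g (φ j) x < a) ∧ (Odd j → b < g (φ j) x) := by
  simp [alternatingLists]

theorem isIndependentBetween_of_forall_initSeg_mem {g : ℕ → X → ℝ} {a b : ℝ} {m : ℕ → ℕ} {N : ℕ}
    (h : ∀ φ : ℕ → ℕ, StrictMono φ → N ≤ φ 0 → ∀ k, initSeg (m ∘ φ) k ∈ alternatingLists g a b) :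
    IsIndependentBetween (fun i => g (m (N + (3 * i + 1)))) a b := by
  classical
  intro s k
  -- The `i`-th low and high positions of an alternating sequence go to the offsets `3 * i`,
  -- `3 * i + 1` if `i ∈ s` and `3 * i + 1`, `3 * i + 2` otherwise: what happens at the offset
  -- `3 * i + 1` is thus prescribed by `s`.
  let slot (j : ℕ) : ℕ := N + (3 * (j / 2) + j % 2 + if j / 2 ∈ s then 0 else 1)
  have slot_even (i : ℕ) : slot (2 * i) = N + (3 * i + if i ∈ s then 0 else 1) := by
    simp [slot]
  have slot_odd (i : ℕ) : slot (2 * i + 1) = N + (3 * i + 1 + if i ∈ s then 0 else 1) := by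
    simp [slot, Nat.mul_add_div]
  have slot_strictMono : StrictMono slot := by
    refine strictMono_nat_of_lt_succ fun j => ?_
    rcases Nat.even_or_odd' j with ⟨i, rfl | rfl⟩
    · rw [slot_even, slot_odd]; lia
    · rw [slot_odd, show 2 * i + 1 + 1 = 2 * (i + 1) by ring, slot_even]
      split_ifs <;> lia
  obtain ⟨x, hx⟩ := initSeg_mem_alternatingLists.1
    (h slot slot_strictMono (Nat.le_add_right _ _) (2 * k))
  refine ⟨x, fun i hi => ⟨fun his => ?_, fun his => ?_⟩⟩
  · simpa [slot_odd, his] using (hx (2 * i + 1) (by lia)).2 ⟨i, rfl⟩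
  · simpa [slot_even, his] using (hx (2 * i) (by lia)).1 (even_two_mul i)

theorem exists_strictMono_alternating_of_frequently {p q : ℕ → Prop} (hp : ∃ᶠ n in atTop, p n)
    (hq : ∃ᶠ n in atTop, q n) (N : ℕ) :
    ∃ φ : ℕ → ℕ, StrictMono φ ∧ N ≤ φ 0 ∧ ∀ j, (Even j → p (φ j)) ∧ (Odd j → q (φ j)) := by
  have hfreq : ∀ j : ℕ, ∃ᶠ n in atTop, N ≤ n ∧ (Even j → p n) ∧ (Odd j → q n) := by
    intro j
    rcases Nat.even_or_odd j with hj | hj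
    · refine (hp.and_eventually (eventually_ge_atTop N)).mono fun n hn => ⟨hn.2, fun _ => hn.1, ?_⟩
      exact fun hj' => absurd hj (Nat.not_even_iff_odd.2 hj')
    · refine (hq.and_eventually (eventually_ge_atTop N)).mono fun n hn => ⟨hn.2, ?_, fun _ => hn.1⟩
      exact fun hj' => absurd hj' (Nat.not_even_iff_odd.2 hj)
  obtain ⟨φ, hφ, hφj⟩ := extraction_forall_of_frequently hfreq
  exact ⟨φ, hφ, (hφj 0).1, fun j => (hφj j).2⟩

theorem exists_strictMono_tendsto_or_isIndependentBetween {g : ℕ → X → ℝ}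
    (hg : ∀ x, Bornology.IsBounded (Set.range fun n => g n x)) :
    ∃ φ : ℕ → ℕ, StrictMono φ ∧ ((∀ x, ∃ c, Tendsto (fun n => g (φ n) x) atTop (𝓝 c)) ∨
      ∃ a b, a < b ∧ IsIndependentBetween (fun n => g (φ n)) a b) := by
  obtain ⟨m, hm, hdich⟩ := exists_strictMono_forall_initSeg_mem_or_exists_notMem
    fun q : {q : ℚ × ℚ // q.1 < q.2} => alternatingLists g q.1.1 q.1.2
  by_cases hstay : ∃ q : {q : ℚ × ℚ // q.1 < q.2}, ∃ N, ∀ φ : ℕ → ℕ, StrictMono φ → N ≤ φ 0 →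
      ∀ k, initSeg (m ∘ φ) k ∈ alternatingLists g q.1.1 q.1.2
  · obtain ⟨⟨⟨a, b⟩, hab⟩, N, hN⟩ := hstay
    have hslot : StrictMono fun i => N + (3 * i + 1) := fun i j hij => by lia
    exact ⟨fun i => m (N + (3 * i + 1)), hm.comp hslot,
      .inr ⟨a, b, Rat.cast_lt.2 hab, isIndependentBetween_of_forall_initSeg_mem hN⟩⟩
  refine ⟨m, hm, .inl fun x => ?_⟩
  have hbdd : Bornology.IsBounded (Set.range fun n => g (m n) x) :=
    (hg x).subset (Set.range_comp_subset_range m fun n => g n x)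
  refine tendsto_of_no_upcrossings Rat.denseRange_cast ?_
    hbdd.bddAbove.isBoundedUnder_of_range hbdd.bddBelow.isBoundedUnder_of_range
  rintro _ ⟨a, rfl⟩ _ ⟨b, rfl⟩ hab ⟨hlow, hhigh⟩
  obtain ⟨N, hN⟩ := hdich ⟨(a, b), Rat.cast_lt.1 hab⟩
  obtain ⟨φ, hφ, hφN, halt⟩ := exists_strictMono_alternating_of_frequently hlow hhigh N
  obtain ⟨k, hk⟩ := hN.resolve_left (fun h => hstay ⟨_, N, h⟩) φ hφ hφN
  exact hk (initSeg_mem_alternatingLists.2 ⟨x, fun j _ => halt j⟩)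

end Independence

section NormedSpace

variable {Y : Type*} [NormedAddCommGroup Y] [NormedSpace ℝ Y]

/-- The lower `ℓ₁` estimate of a sequence of vectors. Bounded sequences satisfying it are those
equivalent to the unit vector basis of `ℓ₁`. -/
def HasLowerL1Estimate (x : ℕ → Y) : Prop :=
  ∃ c : ℝ, 0 < c ∧ ∀ (a : ℕ → ℝ) (k : ℕ),
    c * ∑ i ∈ Finset.range k, |a i| ≤ ‖∑ i ∈ Finset.range k, a i • x i‖

theorem hasLowerL1Estimate_of_isIndependentBetween {x : ℕ → Y} {a b : ℝ} (hab : a < b)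
    (h : IsIndependentBetween (fun n (f : {f : Y →L[ℝ] ℝ // ‖f‖ ≤ 1}) => f.1 (x n)) a b) :
    HasLowerL1Estimate x := by
  refine ⟨(b - a) / 2, by linarith, fun r k => ?_⟩
  set v := ∑ i ∈ Finset.range k, r i • x i
  -- `f₁` and `f₂` realize opposite sign patterns, so that at each `x i` the difference `f₁ - f₂`
  -- has the sign of `r i` and modulus more than `b - a`.
  obtain ⟨⟨f₁, hf₁⟩, hfx₁⟩ := h {i | 0 ≤ r i} k
  obtain ⟨⟨f₂, hf₂⟩, hfx₂⟩ := h {i | 0 ≤ r i}ᶜ k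
  have hterm : ∀ i ∈ Finset.range k, (b - a) * |r i| ≤ r i * (f₁ - f₂) (x i) := by
    intro i hi
    have hi := Finset.mem_range.1 hi
    rw [sub_apply]
    rcases le_or_gt 0 (r i) with hr | hr
    · have hhigh := (hfx₁ i hi).1 hr
      have hlow := (hfx₂ i hi).2 (not_not.2 hr)
      rw [abs_of_nonneg hr]
      nlinarith
    · have hlow := (hfx₁ i hi).2 hr.not_ge
      have hhigh := (hfx₂ i hi).1 hr.not_ge
      rw [abs_of_neg hr]
      nlinarith
  have hnorm : ‖f₁ - f₂‖ ≤ 2 := (norm_sub_le f₁ f₂).trans (by linarith)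
  have hsum : (b - a) * ∑ i ∈ Finset.range k, |r i| ≤ 2 * ‖v‖ :=
    calc (b - a) * ∑ i ∈ Finset.range k, |r i|
        ≤ ∑ i ∈ Finset.range k, r i * (f₁ - f₂) (x i) := by
          rw [Finset.mul_sum]; exact Finset.sum_le_sum hterm
      _ = (f₁ - f₂) v := by simp only [v, map_sum, map_smul, smul_eq_mul]
      _ ≤ ‖f₁ - f₂‖ * ‖v‖ := (le_abs_self _).trans ((f₁ - f₂).le_opNorm v)
      _ ≤ 2 * ‖v‖ := by gcongr
  linarith

/-- Rosenthal's `ℓ₁` theorem. -/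
theorem exists_strictMono_tendsto_or_hasLowerL1Estimate {x : ℕ → Y}
    (hx : Bornology.IsBounded (Set.range x)) :
    ∃ φ : ℕ → ℕ, StrictMono φ ∧
      ((∀ f : Y →L[ℝ] ℝ, ∃ c, Tendsto (fun n => f (x (φ n))) atTop (𝓝 c)) ∨
        HasLowerL1Estimate fun n => x (φ n)) := by
  have hbdd : ∀ f : {f : Y →L[ℝ] ℝ // ‖f‖ ≤ 1},
      Bornology.IsBounded (Set.range fun n => f.1 (x n)) :=
    fun f => by simpa only [← Set.range_comp'] using f.1.lipschitz.isBounded_image hx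
  obtain ⟨φ, hφ, hconv | ⟨a, b, hab, hind⟩⟩ :=
    exists_strictMono_tendsto_or_isIndependentBetween hbdd
  · refine ⟨φ, hφ, .inl fun f => ?_⟩
    obtain ⟨c, hc⟩ := hconv ⟨(‖f‖ + 1)⁻¹ • f, by
      rw [norm_smul, norm_inv, Real.norm_of_nonneg (by positivity), inv_mul_le_iff₀ (by positivity)]
      linarith⟩
    refine ⟨(‖f‖ + 1) * c, (hc.const_mul (‖f‖ + 1)).congr fun n => ?_⟩
    have : ‖f‖ + 1 ≠ 0 := by positivity
    simp [this]
  · exact ⟨φ, hφ, .inr (hasLowerL1Estimate_of_isIndependentBetween hab hind)⟩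

theorem exists_l1_embedding_of_hasLowerL1Estimate [CompleteSpace Y] {x : ℕ → Y}
    (hx : Bornology.IsBounded (Set.range x)) (hlow : HasLowerL1Estimate x) :
    ∃ T : lp (fun _ : ℕ => ℝ) 1 →L[ℝ] Y, ∃ c : ℝ, 0 < c ∧
      ∀ a : lp (fun _ : ℕ => ℝ) 1, c * ‖a‖ ≤ ‖T a‖ := by
  obtain ⟨C, hC⟩ := hx.exists_norm_le
  have hterm : ∀ (a : ℕ → ℝ) (i : ℕ), ‖a i • x i‖ ≤ C * |a i| := by
    intro a i
    rw [norm_smul, Real.norm_eq_abs, mul_comm C]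
    gcongr
    exact hC _ (Set.mem_range_self i)
  have habs : ∀ a : lp (fun _ : ℕ => ℝ) 1, HasSum (fun i => |a i|) ‖a‖ := fun a => by
    simpa using lp.hasSum_norm (p := 1) (by simp) a
  have hsum : ∀ a : lp (fun _ : ℕ => ℝ) 1, Summable fun i => a i • x i := fun a =>
    .of_norm_bounded ((habs a).summable.mul_left C) (hterm a)
  let T : lp (fun _ : ℕ => ℝ) 1 →ₗ[ℝ] Y :=
    { toFun := fun a => ∑' i, a i • x i
      map_add' := fun a a' => by
        simp [add_smul, (hsum a).tsum_add (hsum a')]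
      map_smul' := fun r a => by
        simp [mul_smul, (hsum a).tsum_const_smul] }
  obtain ⟨c, hc, hlow⟩ := hlow
  refine ⟨T.mkContinuous C fun a => ?_, c, hc, fun a => ?_⟩
  · exact tsum_of_norm_bounded ((habs a).mul_left C) (hterm a)
  · exact le_of_tendsto_of_tendsto' ((habs a).tendsto_sum_nat.const_mul c)
      (hsum a).hasSum.tendsto_sum_nat.norm (hlow a)

theorem exists_isClosed_coFG_forall_norm_le_norm_sub {s : Set Y} (hs : s.Finite) :
    ∃ E : Submodule ℝ Y, IsClosed (E : Set Y) ∧ E.CoFG ∧ ∀ v ∈ s, ∀ z ∈ E, ‖v‖ ≤ ‖z - v‖ := by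
  have := hs.to_subtype
  choose g hg hgv using fun v : s => exists_dual_vector'' ℝ (v : Y)
  let L : Y →L[ℝ] (s → ℝ) := ContinuousLinearMap.pi g
  refine ⟨L.ker, L.isClosed_ker, .ker L.toLinearMap, fun v hv z hz => ?_⟩
  have hgz : g ⟨v, hv⟩ z = 0 := congrFun (LinearMap.mem_ker.1 hz) ⟨v, hv⟩
  calc ‖v‖ = -g ⟨v, hv⟩ (z - v) := by rw [map_sub, hgz, hgv]; simp
    _ ≤ ‖g ⟨v, hv⟩ (z - v)‖ := neg_le_abs _
    _ ≤ 1 * ‖z - v‖ := (g ⟨v, hv⟩).le_of_opNorm_le (hg _) _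
    _ = ‖z - v‖ := one_mul _

theorem exists_norm_eq_one_of_coFG (hY : ¬ FiniteDimensional ℝ Y) {E : Submodule ℝ Y}
    (hE : E.CoFG) : ∃ z ∈ E, ‖z‖ = 1 := by
  have hbot : E ≠ ⊥ := by
    rintro rfl
    exact hY ((Module.Finite.iff_cofg_bot ℝ Y).1 hE)
  obtain ⟨z, hzE, hz⟩ := E.exists_mem_ne_zero_of_ne_bot hbot
  exact ⟨‖z‖⁻¹ • z, E.smul_mem _ hzE, norm_smul_inv_norm hz⟩

theorem exists_strictMono_tendsto_sub_zero {x : ℕ → Y} (hx : Bornology.IsBounded (Set.range x))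
    (hl1 : ∀ x : ℕ → Y, Bornology.IsBounded (Set.range x) → ¬ HasLowerL1Estimate x) :
    ∃ φ : ℕ → ℕ, StrictMono φ ∧
      ∀ f : Y →L[ℝ] ℝ, Tendsto (fun n => f (x (φ (n + 1)) - x (φ n))) atTop (𝓝 0) := by
  obtain ⟨φ, hφ, hcauchy | hlow⟩ := exists_strictMono_tendsto_or_hasLowerL1Estimate hx
  · refine ⟨φ, hφ, fun f => ?_⟩
    obtain ⟨c, hc⟩ := hcauchy f
    simpa using (hc.comp (tendsto_add_atTop_nat 1)).sub hc
  · exact absurd hlow (hl1 _ (hx.subset (Set.range_comp_subset_range φ x)))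

end NormedSpace

section MidpointModulus

variable {Y : Type*} [NormedAddCommGroup Y] [NormedSpace ℝ Y]

/-- The values `max {‖y + t z‖, ‖y - t z‖}`, `z ∈ S_E`, whose infimum enters `δ̃_Y(y,t)`. -/
def midpointNorms (E : Submodule ℝ Y) (y : Y) (t : ℝ) : Set ℝ :=
  {m | ∃ z : Y, z ∈ E ∧ ‖z‖ = 1 ∧ m = max ‖y + t • z‖ ‖y - t • z‖}

theorem bddBelow_midpointNorms (E : Submodule ℝ Y) (y : Y) (t : ℝ) :
    BddBelow (midpointNorms E y t) := by
  refine ⟨0, ?_⟩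
  rintro _ ⟨z, -, -, rfl⟩
  positivity

theorem sInf_midpointNorms_le (E : Submodule ℝ Y) (y : Y) (t : ℝ) :
    sInf (midpointNorms E y t) ≤ ‖y‖ + |t| := by
  rcases (midpointNorms E y t).eq_empty_or_nonempty with hE | ⟨m, hm⟩
  · rw [hE, Real.sInf_empty]
    positivity
  · refine (csInf_le (bddBelow_midpointNorms E y t) hm).trans ?_
    obtain ⟨z, -, hz, rfl⟩ := hm
    have htz : ‖t • z‖ = |t| := by rw [norm_smul, hz, mul_one, Real.norm_eq_abs]
    exact max_le (htz ▸ norm_add_le y (t • z)) (htz ▸ norm_sub_le y (t • z))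

theorem sInf_midpointNorms_sub_one_le_deltaTilde {E : Submodule ℝ Y}
    (hclosed : IsClosed (E : Set Y)) (hE : E.CoFG) (y : Y) (t : ℝ) :
    sInf (midpointNorms E y t) - 1 ≤ deltaTilde Y y t := by
  refine le_csSup ⟨‖y‖ + |t| - 1, ?_⟩ ⟨E, hclosed, hE, rfl⟩
  rintro _ ⟨E', -, -, rfl⟩
  exact sub_le_sub_right (sInf_midpointNorms_le E' y t) 1

theorem abs_le_deltaTilde_of_finiteDimensional [FiniteDimensional ℝ Y] {y : Y} (hy : ‖y‖ = 1)
    (t : ℝ) : |t| ≤ deltaTilde Y y t := by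
  -- `E = ⊥` would not do: its unit sphere is empty, and `sInf ∅ = 0` in `ℝ`.
  refine le_trans ?_ (sInf_midpointNorms_sub_one_le_deltaTilde
    (E := ℝ ∙ y) (Submodule.closed_of_finiteDimensional _) inferInstance y t)
  rw [le_sub_iff_add_le']
  refine le_csInf ⟨_, y, Submodule.mem_span_singleton_self y, hy, rfl⟩ ?_
  rintro _ ⟨z, hz, hz1, rfl⟩
  obtain ⟨r, rfl⟩ := Submodule.mem_span_singleton.1 hz
  have hr : |r| = 1 := by simpa [norm_smul, hy] using hz1
  have hadd : ‖y + t • r • y‖ = |1 + t * r| := by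
    rw [show y + t • r • y = (1 + t * r) • y by module, norm_smul, hy, mul_one, Real.norm_eq_abs]
  have hsub : ‖y - t • r • y‖ = |1 - t * r| := by
    rw [show y - t • r • y = (1 - t * r) • y by module, norm_smul, hy, mul_one, Real.norm_eq_abs]
  calc 1 + |t| = 1 + |t * r| := by rw [abs_mul, hr, mul_one]
    _ = max (1 + t * r) (1 - t * r) := by rw [abs, ← max_add_add_left, sub_eq_add_neg]
    _ ≤ max ‖y + t • r • y‖ ‖y - t • r • y‖ := by
      rw [hadd, hsub]
      exact max_le_max (le_abs_self _) (le_abs_self _)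

theorem exists_norm_eq_one_max_norm_lt_of_deltaTilde_lt (hY : ¬ FiniteDimensional ℝ Y) {y : Y}
    {t ε : ℝ} (hε : deltaTilde Y y t < ε) {E : Submodule ℝ Y} (hclosed : IsClosed (E : Set Y))
    (hE : E.CoFG) : ∃ z ∈ E, ‖z‖ = 1 ∧ max ‖y + t • z‖ ‖y - t • z‖ < 1 + ε := by
  obtain ⟨z₀, hz₀E, hz₀⟩ := exists_norm_eq_one_of_coFG hY hE
  have hne : (midpointNorms E y t).Nonempty := ⟨_, z₀, hz₀E, hz₀, rfl⟩
  have hlt : sInf (midpointNorms E y t) < 1 + ε := by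
    linarith [sInf_midpointNorms_sub_one_le_deltaTilde hclosed hE y t]
  obtain ⟨_, ⟨z, hzE, hz, rfl⟩, hzlt⟩ := exists_lt_of_csInf_lt hne hlt
  exact ⟨z, hzE, hz, hzlt⟩

theorem exists_separated_seq_of_deltaTilde_nonpos (hY : ¬ FiniteDimensional ℝ Y) {y : Y} {t : ℝ}
    (hδ : deltaTilde Y y t ≤ 0) :
    ∃ x : ℕ → Y, (∀ n, ‖x n‖ = 1) ∧ (∀ i j, i < j → 1 ≤ ‖x j - x i‖) ∧
      ∀ n : ℕ, max ‖y + t • x n‖ ‖y - t • x n‖ ≤ 1 + 1 / ((n : ℝ) + 1) := by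
  have hnext : ∀ σ : List Y, ∃ z : Y, ‖z‖ = 1 ∧ (∀ v ∈ σ, ‖v‖ ≤ ‖z - v‖) ∧
      max ‖y + t • z‖ ‖y - t • z‖ ≤ 1 + 1 / ((σ.length : ℝ) + 1) := by
    intro σ
    obtain ⟨E, hclosed, hE, hsep⟩ := exists_isClosed_coFG_forall_norm_le_norm_sub σ.finite_toSet
    obtain ⟨z, hzE, hz, hlt⟩ := exists_norm_eq_one_max_norm_lt_of_deltaTilde_lt hY
      (hδ.trans_lt (Nat.one_div_pos_of_nat (n := σ.length))) hclosed hE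
    exact ⟨z, hz, fun v hv => hsep v hv z hzE, hlt.le⟩
  obtain ⟨x, hx⟩ := exists_seq_forall_initSeg hnext
  refine ⟨x, fun n => (hx n).1, fun i j hij => ?_, fun n => ?_⟩
  · exact (hx i).1 ▸ (hx j).2.1 _ (mem_initSeg_of_lt x hij)
  · simpa using (hx n).2.2

theorem max_norm_half_smul_sub_le {y u v : Y} {t r : ℝ}
    (hu : max ‖y + t • u‖ ‖y - t • u‖ ≤ r) (hv : max ‖y + t • v‖ ‖y - t • v‖ ≤ r) :
    max ‖y + (t / 2) • (u - v)‖ ‖y - (t / 2) • (u - v)‖ ≤ r := by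
  have hmid : ∀ {p q : Y}, ‖p‖ ≤ r → ‖q‖ ≤ r → ‖midpoint ℝ p q‖ ≤ r := fun hp hq => by
    simpa using (convex_closedBall (0 : Y) r).midpoint_mem (by simpa using hp) (by simpa using hq)
  have hadd : y + (t / 2) • (u - v) = midpoint ℝ (y + t • u) (y - t • v) := by
    rw [midpoint_eq_smul_add, invOf_eq_inv]; module
  have hsub : y - (t / 2) • (u - v) = midpoint ℝ (y - t • u) (y + t • v) := by
    rw [midpoint_eq_smul_add, invOf_eq_inv]; module
  rw [max_le_iff] at hu hv
  rw [hadd, hsub]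
  exact max_le (hmid hu.1 hv.2) (hmid hu.2 hv.1)

theorem limsup_max_norm_half_smul_sub_le_one {y : Y} {t : ℝ} {x : ℕ → Y}
    (hx : ∀ n : ℕ, max ‖y + t • x n‖ ‖y - t • x n‖ ≤ 1 + 1 / ((n : ℝ) + 1)) {φ : ℕ → ℕ}
    (hφ : StrictMono φ) :
    limsup (fun n => max ‖y + (t / 2) • (x (φ (n + 1)) - x (φ n))‖
      ‖y - (t / 2) • (x (φ (n + 1)) - x (φ n))‖) atTop ≤ 1 := by
  have hbound : ∀ {n k : ℕ}, n ≤ k →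
      max ‖y + t • x k‖ ‖y - t • x k‖ ≤ 1 + 1 / ((n : ℝ) + 1) := fun {n k} hnk =>
    (hx k).trans (by gcongr)
  have htendsto : Tendsto (fun n : ℕ => 1 + 1 / ((n : ℝ) + 1)) atTop (𝓝 1) := by
    simpa using tendsto_one_div_add_atTop_nhds_zero_nat.const_add (1 : ℝ)
  refine le_trans (limsup_le_limsup (Eventually.of_forall fun n => ?_) ?_
    htendsto.isBoundedUnder_le) htendsto.limsup_eq.le
  · exact max_norm_half_smul_sub_le (hbound (n.le_succ.trans hφ.le_apply)) (hbound hφ.le_apply)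
  · exact isCoboundedUnder_le_of_le atTop fun n => le_max_of_le_left (norm_nonneg _)

theorem deltaTilde_pos_of_one_lt_limsup
    (hl1 : ∀ x : ℕ → Y, Bornology.IsBounded (Set.range x) → ¬ HasLowerL1Estimate x)
    {y : Y} (hy : ‖y‖ = 1) {t : ℝ} (ht : t ≠ 0)
    (h : ∀ z : ℕ → Y, (∀ f : Y →L[ℝ] ℝ, Tendsto (fun n => f (z n)) atTop (𝓝 0)) →
      (∀ n, 1 ≤ ‖z n‖) →
      1 < limsup (fun n => max ‖y + (t / 2) • z n‖ ‖y - (t / 2) • z n‖) atTop) :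
    0 < deltaTilde Y y t := by
  by_cases hY : FiniteDimensional ℝ Y
  · exact (abs_pos.2 ht).trans_le (abs_le_deltaTilde_of_finiteDimensional hy t)
  by_contra! hδ
  obtain ⟨x, hx1, hsep, hmax⟩ := exists_separated_seq_of_deltaTilde_nonpos hY hδ
  have hbdd : Bornology.IsBounded (Set.range x) :=
    isBounded_iff_forall_norm_le.2 ⟨1, Set.forall_mem_range.2 fun n => (hx1 n).le⟩
  obtain ⟨φ, hφ, hnull⟩ := exists_strictMono_tendsto_sub_zero hbdd hl1
  exact (h _ hnull fun n => hsep _ _ (hφ n.lt_succ_self)).not_ge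
    (limsup_max_norm_half_smul_sub_le_one hmax hφ)

end MidpointModulus

theorem locallyAMUC_of_limsup_general (Y : Type*) [NormedAddCommGroup Y] [NormedSpace ℝ Y]
    (hl1 : ∀ x : ℕ → Y, Bornology.IsBounded (Set.range x) → ¬ HasLowerL1Estimate x)
    (h : ∀ y : Y, ‖y‖ = 1 → ∀ t : ℝ, 0 < t → ∀ z : ℕ → Y,
      (∀ f : Y →L[ℝ] ℝ, Tendsto (fun n => f (z n)) atTop (𝓝 0)) → (∀ n, 1 ≤ ‖z n‖) →
      1 < limsup (fun n => max ‖y + t • z n‖ ‖y - t • z n‖) atTop) :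
    LocallyAMUC Y :=
  fun y hy t ht => deltaTilde_pos_of_one_lt_limsup hl1 hy ht.ne' (h y hy (t / 2) (half_pos ht))

/-- If a Banach space `Y` contains no isomorphic copy of `ℓ₁` and for every
`y ∈ S_Y` and `t > 0` there is `δ > 0` with
`limsup max {‖y + t zₙ‖, ‖y - t zₙ‖} ≥ 1 + δ` for every weakly null sequence `(zₙ)` with
`‖zₙ‖ ≥ 1` for all `n`, then `Y` is locally AMUC. -/
theorem locallyAMUC_of_limsup (Y : Type*) [NormedAddCommGroup Y] [NormedSpace ℝ Y]
    [CompleteSpace Y]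
    (hl1 : ¬ ∃ T : lp (fun _ : ℕ => ℝ) 1 →L[ℝ] Y, ∃ c : ℝ, 0 < c ∧
      ∀ x : lp (fun _ : ℕ => ℝ) 1, c * ‖x‖ ≤ ‖T x‖)
    (h : ∀ y : Y, ‖y‖ = 1 → ∀ t : ℝ, 0 < t → ∃ δ : ℝ, 0 < δ ∧
      ∀ z : ℕ → Y,
        (∀ f : Y →L[ℝ] ℝ, Tendsto (fun n => f (z n)) atTop (𝓝 0)) →
        (∀ n : ℕ, 1 ≤ ‖z n‖) →
        1 + δ ≤ limsup (fun n => max ‖y + t • z n‖ ‖y - t • z n‖) atTop) :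
    LocallyAMUC Y :=
  locallyAMUC_of_limsup_general Y
    (fun _ hx hlow => hl1 (exists_l1_embedding_of_hasLowerL1Estimate hx hlow))
    fun y hy t ht z hz hz1 => by
      obtain ⟨δ, hδ, hlim⟩ := h y hy t ht
      linarith [hlim z hz hz1]
end
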